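/- arXiv:1309.1974 — 2 statements merged into one kernel-verified Lean document; each statement's English description precedes it below -/
import Mathlib

section
/- Let 1 ≤ n < α and θ, κ < 0. Suppose (u, v) is a pair of positive Lebesgue measurable functions on ℝⁿ, not identically +∞, satisfying u(y) = ∫_{ℝⁿ}|x−y|^{α−n} v(x)^κ dx for all y ∈ ℝⁿ and v(x) = ∫_{ℝⁿ}|x−y|^{α−n} u(y)^θ dy for all x ∈ ℝⁿ. Then u and v are smooth: u, v ∈ C^∞(ℝⁿ). -/
open MeasureTheory ENNReal

/-!
Both equations have the form `w = f ⋆ K` with `K x = ‖x‖ ^ p`, `p = α - n > 0`, and the regularity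
of `u` and `v` is bootstrapped between them: if `f` is `C^m`, then `f ⋆ K` is `C^(m+1)`.

Finiteness of the integrals at two distinct points makes `(1 + ‖x‖) ^ p * f x` integrable. Split
`K = χ K + (1 - χ) K` with a bump function `χ` at the origin. The far part `(1 - χ) K` is smooth and
all its derivatives are `O((1 + ‖x‖) ^ p)`, so one may differentiate under the integral sign as
often as one likes. The near part has compact support, so `f` may be cut off away from any given
point; `m` derivatives then fall on `f`, and one more falls on `χ K`, whose classical derivative is
integrable. That this derivative is also the one to use under the convolution follows from
homogeneity: the rescalings `c ^ (-p) (χ K)(c x)` tend to `0` in `L¹` together with their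
derivatives as `c → ∞`, and `χ K` minus such a rescaling is `(χ - χ(c ·)) K`, which is smooth since
it vanishes near the origin.
-/

open Filter Topology Set Metric Module
open scoped Convolution
open ContinuousLinearMap (lsmul)

variable {E H : Type*} [NormedAddCommGroup E] [NormedAddCommGroup H] [NormedSpace ℝ H]

section Convolution

variable {p C : ℝ}

theorem one_add_norm_sub_rpow_le (hp : 0 ≤ p) (y t : E) :
    (1 + ‖y - t‖) ^ p ≤ (1 + ‖y‖) ^ p * (1 + ‖t‖) ^ p := by
  rw [← Real.mul_rpow (by positivity) (by positivity)]
  gcongr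
  nlinarith [norm_sub_le y t, mul_nonneg (norm_nonneg y) (norm_nonneg t)]

theorem continuous_one_add_norm_rpow (p : ℝ) : Continuous fun x : E ↦ (1 + ‖x‖) ^ p :=
  .rpow_const (by fun_prop) fun x ↦ .inl (by positivity)

variable {f : E → ℝ} {K : E → H}

theorem norm_smul_comp_sub_le (hp : 0 ≤ p) (hK : ∀ x, ‖K x‖ ≤ C * (1 + ‖x‖) ^ p) {R : ℝ} {y : E}
    (hy : ‖y‖ ≤ R) (t : E) :
    ‖f t • K (y - t)‖ ≤ C * (1 + R) ^ p * ‖(1 + ‖t‖) ^ p * f t‖ := by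
  have hC : 0 ≤ C := by simpa using (norm_nonneg _).trans (hK 0)
  rw [norm_smul, norm_mul, Real.norm_of_nonneg (by positivity : 0 ≤ (1 + ‖t‖) ^ p)]
  calc ‖f t‖ * ‖K (y - t)‖ ≤ ‖f t‖ * (C * ((1 + ‖y‖) ^ p * (1 + ‖t‖) ^ p)) := by
        gcongr
        exact (hK _).trans (by gcongr; exact one_add_norm_sub_rpow_le hp y t)
    _ ≤ ‖f t‖ * (C * ((1 + R) ^ p * (1 + ‖t‖) ^ p)) := by gcongr
    _ = C * (1 + R) ^ p * ((1 + ‖t‖) ^ p * ‖f t‖) := by ring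

variable [MeasurableSpace E] {μ : Measure E}

theorem convolution_eventuallyEq_of_eqOn_ball {g : E → ℝ} {y : E} {r R : ℝ}
    (hK : Function.support K ⊆ closedBall 0 R) (hRr : R < r) (hfg : EqOn f g (ball y r)) :
    f ⋆[lsmul ℝ ℝ, μ] K =ᶠ[𝓝 y] g ⋆[lsmul ℝ ℝ, μ] K := by
  filter_upwards [ball_mem_nhds y (sub_pos.2 hRr)] with x hx
  rw [convolution_lsmul, convolution_lsmul]
  refine integral_congr_ae (.of_forall fun t ↦ ?_)
  by_cases ht : K (x - t) = 0
  · simp only [ht, smul_zero]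
  · have htx : dist t x ≤ R := by simpa [dist_eq_norm, norm_sub_rev] using hK ht
    rw [mem_ball] at hx
    have hty : t ∈ ball y r := mem_ball.2 (by linarith [dist_triangle t x y])
    simp only [hfg hty]

variable [OpensMeasurableSpace E]

theorem aestronglyMeasurable_of_integrable_weight_mul
    (hf : Integrable (fun x ↦ (1 + ‖x‖) ^ p * f x) μ) : AEStronglyMeasurable f μ := by
  refine ((continuous_one_add_norm_rpow (-p)).aestronglyMeasurable.mul
    hf.aestronglyMeasurable).congr (.of_forall fun x ↦ ?_)
  simp only [Pi.mul_apply]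
  rw [← mul_assoc, ← Real.rpow_add (by positivity), neg_add_cancel, Real.rpow_zero, one_mul]

variable [SecondCountableTopology E]

theorem aestronglyMeasurable_smul_comp_sub (hf : Integrable (fun x ↦ (1 + ‖x‖) ^ p * f x) μ)
    (hK : Continuous K) (y : E) : AEStronglyMeasurable (fun t ↦ f t • K (y - t)) μ :=
  (aestronglyMeasurable_of_integrable_weight_mul hf).smul
    (hK.comp (continuous_const.sub continuous_id)).aestronglyMeasurable

theorem convolutionExists_of_norm_le (hp : 0 ≤ p)
    (hf : Integrable (fun x ↦ (1 + ‖x‖) ^ p * f x) μ) (hKc : Continuous K)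
    (hK : ∀ x, ‖K x‖ ≤ C * (1 + ‖x‖) ^ p) : ConvolutionExists f K (lsmul ℝ ℝ) μ := fun y ↦
  (hf.norm.const_mul (C * (1 + ‖y‖) ^ p)).mono' (aestronglyMeasurable_smul_comp_sub hf hKc y)
    (.of_forall (norm_smul_comp_sub_le hp hK le_rfl))

theorem continuous_convolution_of_norm_le (hp : 0 ≤ p)
    (hf : Integrable (fun x ↦ (1 + ‖x‖) ^ p * f x) μ) (hKc : Continuous K)
    (hK : ∀ x, ‖K x‖ ≤ C * (1 + ‖x‖) ^ p) : Continuous (f ⋆[lsmul ℝ ℝ, μ] K) := by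
  rw [continuous_iff_continuousAt]
  intro y
  refine continuousAt_of_dominated (.of_forall (aestronglyMeasurable_smul_comp_sub hf hKc))
    (bound := fun t ↦ C * (1 + (‖y‖ + 1)) ^ p * ‖(1 + ‖t‖) ^ p * f t‖)
    ?_ (hf.norm.const_mul _) (.of_forall fun t ↦ by fun_prop)
  filter_upwards [ball_mem_nhds y one_pos] with x hx
  exact .of_forall (norm_smul_comp_sub_le hp hK (norm_lt_of_mem_ball hx).le)

end Convolution

section PowerKernel

theorem integrable_and_integral_eq_of_ofReal_eq_lintegral {Ω : Type*} [MeasurableSpace Ω]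
    {μ : Measure Ω} {φ : Ω → ℝ} {c : ℝ} (hφ : AEStronglyMeasurable φ μ) (hφ₀ : ∀ x, 0 ≤ φ x)
    (hc : 0 ≤ c) (h : ENNReal.ofReal c = ∫⁻ x, ENNReal.ofReal (φ x) ∂μ) :
    Integrable φ μ ∧ ∫ x, φ x ∂μ = c := by
  refine ⟨⟨hφ, ?_⟩, ?_⟩
  · rw [hasFiniteIntegral_iff_ofReal (.of_forall hφ₀), ← h]
    exact ENNReal.ofReal_lt_top
  · rw [integral_eq_lintegral_of_nonneg_ae (.of_forall hφ₀) hφ, ← h, ENNReal.toReal_ofReal hc]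

theorem exists_one_add_norm_rpow_le_dist_rpow_add_dist_rpow {a b : E} (hab : a ≠ b) {p : ℝ}
    (hp : 0 ≤ p) : ∃ C, ∀ x, (1 + ‖x‖) ^ p ≤ C * (dist x a ^ p + dist x b ^ p) := by
  have hdist : 0 < dist a b := dist_pos.2 hab
  set L : ℝ := 2 * (1 + (1 + ‖a‖) / dist a b)
  refine ⟨L ^ p, fun x ↦ ?_⟩
  have hone : 1 ≤ (dist x a + dist x b) / dist a b :=
    (one_le_div hdist).2 (dist_triangle_left a b x)
  have hsum : dist x a + dist x b ≤ 2 * max (dist x a) (dist x b) := by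
    linarith [le_max_left (dist x a) (dist x b), le_max_right (dist x a) (dist x b)]
  have hlin : 1 + ‖x‖ ≤ L * max (dist x a) (dist x b) := by
    calc 1 + ‖x‖ ≤ dist x a + dist x b + (1 + ‖a‖) * 1 := by
          have := norm_le_norm_add_norm_sub' x a
          rw [← dist_eq_norm] at this
          linarith [dist_nonneg (x := x) (y := b)]
      _ ≤ dist x a + dist x b + (1 + ‖a‖) * ((dist x a + dist x b) / dist a b) := by gcongr
      _ = (1 + (1 + ‖a‖) / dist a b) * (dist x a + dist x b) := by ring
      _ ≤ (1 + (1 + ‖a‖) / dist a b) * (2 * max (dist x a) (dist x b)) := by gcongr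
      _ = L * max (dist x a) (dist x b) := by ring
  calc (1 + ‖x‖) ^ p ≤ (L * max (dist x a) (dist x b)) ^ p := by gcongr
    _ = L ^ p * max (dist x a) (dist x b) ^ p := Real.mul_rpow (by positivity) (by positivity)
    _ ≤ L ^ p * (dist x a ^ p + dist x b ^ p) := by
      gcongr
      rw [(Real.monotoneOn_rpow_Ici_of_exponent_nonneg hp).map_max dist_nonneg dist_nonneg]
      exact max_le_add_of_nonneg (by positivity) (by positivity)

theorem integrable_weight_mul_of_integrable_dist_rpow_mul [MeasurableSpace E]
    [OpensMeasurableSpace E] {μ : Measure E} {f : E → ℝ} {p : ℝ} (hp : 0 ≤ p)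
    (hf : AEStronglyMeasurable f μ) {a b : E} (hab : a ≠ b)
    (ha : Integrable (fun x ↦ dist x a ^ p * f x) μ)
    (hb : Integrable (fun x ↦ dist x b ^ p * f x) μ) :
    Integrable (fun x ↦ (1 + ‖x‖) ^ p * f x) μ := by
  obtain ⟨C, hC⟩ := exists_one_add_norm_rpow_le_dist_rpow_add_dist_rpow hab hp
  refine ((ha.norm.add hb.norm).const_mul C).mono'
    ((continuous_one_add_norm_rpow p).measurable.aestronglyMeasurable.mul hf)
    (.of_forall fun x ↦ ?_)
  have hnorm {w : ℝ} (hw : 0 ≤ w) : ‖w * f x‖ = w * ‖f x‖ := by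
    rw [norm_mul, Real.norm_of_nonneg hw]
  rw [Pi.add_apply, hnorm (by positivity), hnorm (by positivity), hnorm (by positivity), ← add_mul,
    ← mul_assoc]
  gcongr
  exact hC x

theorem convolution_norm_rpow [MeasurableSpace E] {μ : Measure E} (f : E → ℝ) (p : ℝ) (y : E) :
    (f ⋆[lsmul ℝ ℝ, μ] fun x ↦ ‖x‖ ^ p) y = ∫ x, dist x y ^ p * f x ∂μ := by
  simp only [convolution_lsmul, dist_eq_norm', smul_eq_mul, mul_comm]

theorem continuous_convolution_norm_rpow [MeasurableSpace E] [OpensMeasurableSpace E]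
    [SecondCountableTopology E] {μ : Measure E} {f : E → ℝ} {p : ℝ} (hp : 0 ≤ p)
    (hf : Integrable (fun x ↦ (1 + ‖x‖) ^ p * f x) μ) :
    Continuous (f ⋆[lsmul ℝ ℝ, μ] fun x ↦ ‖x‖ ^ p) :=
  continuous_convolution_of_norm_le (C := 1) hp hf (continuous_norm.rpow_const fun _ ↦ .inr hp)
    fun x ↦ by
      rw [one_mul, Real.norm_of_nonneg (by positivity)]
      gcongr
      simp

theorem integrable_and_eq_convolution_of_integral_equation [MeasurableSpace E]
    [OpensMeasurableSpace E] [Nontrivial E] {μ : Measure E} {f w : E → ℝ} {p : ℝ} (hp : 0 ≤ p)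
    (hf : Measurable f) (hf₀ : ∀ x, 0 ≤ f x) (hw : ∀ y, 0 ≤ w y)
    (h : ∀ y, ENNReal.ofReal (w y) = ∫⁻ x, ENNReal.ofReal (dist x y ^ p * f x) ∂μ) :
    Integrable (fun x ↦ (1 + ‖x‖) ^ p * f x) μ ∧
      f ⋆[lsmul ℝ ℝ, μ] (fun x ↦ ‖x‖ ^ p) = w := by
  have hcont (y : E) : Continuous fun x : E ↦ dist x y ^ p :=
    .rpow_const (by fun_prop) fun _ ↦ .inr hp
  have hy (y : E) := integrable_and_integral_eq_of_ofReal_eq_lintegral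
    ((hcont y).measurable.mul hf).aestronglyMeasurable
    (fun x ↦ mul_nonneg (by positivity) (hf₀ x)) (hw y) (h y)
  obtain ⟨a, b, hab⟩ := exists_pair_ne E
  exact ⟨integrable_weight_mul_of_integrable_dist_rpow_mul hp hf.aestronglyMeasurable hab
    (hy a).1 (hy b).1, funext fun y ↦ (convolution_norm_rpow f p y).trans (hy y).2⟩

end PowerKernel

variable [NormedSpace ℝ E]

/-- Positive homogeneity of degree `q`, for the kernel `‖x‖ ^ p` and its derivatives. -/
def IsPosHomogeneous (q : ℝ) (F : E → H) : Prop :=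
  ∀ c : ℝ, 0 < c → ∀ x, F (c • x) = c ^ q • F x

theorem isPosHomogeneous_norm_rpow (p : ℝ) : IsPosHomogeneous p fun x : E ↦ ‖x‖ ^ p := by
  intro c hc x
  simp only [norm_smul, Real.norm_of_nonneg hc.le, Real.mul_rpow hc.le (norm_nonneg x), smul_eq_mul]

namespace IsPosHomogeneous

variable {q : ℝ} {F : E → H}

theorem fderiv (hF : IsPosHomogeneous q F) : IsPosHomogeneous (q - 1) (_root_.fderiv ℝ F) := by
  intro c hc x
  have scaled : (fun y ↦ F (c • y)) = c ^ q • F := funext fun y ↦ hF c hc y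
  have hD : c • _root_.fderiv ℝ F (c • x) = c ^ q • _root_.fderiv ℝ F x := by
    rw [← fderiv_comp_smul, scaled, fderiv_const_smul_field]
    rfl
  rw [Real.rpow_sub_one hc.ne', div_eq_inv_mul, mul_smul, ← hD, inv_smul_smul₀ hc.ne']

theorem iteratedFDeriv (hF : IsPosHomogeneous q F) (k : ℕ) :
    IsPosHomogeneous (q - k) (_root_.iteratedFDeriv ℝ k F) := by
  induction k with
  | zero =>
    intro c hc x
    ext m
    simp [hF c hc x]
  | succ k ih =>
    intro c hc x
    have hdeg : q - (k + 1 : ℕ) = q - k - 1 := by push_cast; ring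
    rw [iteratedFDeriv_succ_eq_comp_left, hdeg]
    simp only [Function.comp_apply, ih.fderiv c hc x, map_smul]

theorem exists_norm_le [FiniteDimensional ℝ E] (hF : IsPosHomogeneous q F)
    (hcont : ContinuousOn F {0}ᶜ) : ∃ C, 0 ≤ C ∧ ∀ x ≠ 0, ‖F x‖ ≤ C * ‖x‖ ^ q := by
  have hsphere : sphere (0 : E) 1 ⊆ {0}ᶜ := fun x hx ↦ ne_of_mem_sphere hx one_ne_zero
  obtain ⟨C, hC⟩ := (isCompact_sphere (0 : E) 1).exists_bound_of_continuousOn (hcont.mono hsphere)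
  refine ⟨max C 0, le_max_right _ _, fun x hx ↦ ?_⟩
  have hnorm : 0 < ‖x‖ := norm_pos_iff.2 hx
  have hunit : ‖x‖⁻¹ • x ∈ sphere (0 : E) 1 := by
    simp [norm_smul, inv_mul_cancel₀ hnorm.ne']
  calc ‖F x‖ = ‖F (‖x‖ • ‖x‖⁻¹ • x)‖ := by rw [smul_inv_smul₀ hnorm.ne']
    _ = ‖x‖ ^ q * ‖F (‖x‖⁻¹ • x)‖ := by
      rw [hF _ hnorm, norm_smul, Real.norm_of_nonneg (by positivity)]
    _ ≤ max C 0 * ‖x‖ ^ q := by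
      rw [mul_comm]; gcongr; exact (hC _ hunit).trans (le_max_left _ _)

theorem locallyIntegrable [FiniteDimensional ℝ E] [Nontrivial E] [MeasurableSpace E] [BorelSpace E]
    {μ : Measure E} [μ.IsAddHaarMeasure] (hF : IsPosHomogeneous q F)
    (hcont : ContinuousOn F {0}ᶜ) (hq : -(finrank ℝ E : ℝ) < q) : LocallyIntegrable F μ := by
  obtain ⟨C, -, hC⟩ := hF.exists_norm_le hcont
  have hae : ∀ᵐ x ∂μ, x ∈ ({0}ᶜ : Set E) := compl_mem_ae_iff.2 (measure_singleton 0)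
  have hmeas : AEStronglyMeasurable F μ := by
    rw [← Measure.restrict_eq_self_of_ae_mem hae]
    exact hcont.aestronglyMeasurable (measurableSet_singleton 0).compl
  refine locallyIntegrable_of_norm_le_rpow (α := -q) (C := C) finrank_pos (by linarith) ?_ hmeas
  filter_upwards [hae] with x hx
  simpa using hC x hx

end IsPosHomogeneous

section L1Approximation

variable [MeasurableSpace E] [BorelSpace E] [FiniteDimensional ℝ E] {μ : Measure E}
  [μ.IsAddHaarMeasure] {f : E → ℝ} {M : ℝ}

theorem norm_convolution_sub_le {K₁ K₂ : E → H} (hf : AEStronglyMeasurable f μ)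
    (hfM : ∀ x, ‖f x‖ ≤ M) (hK₁ : Integrable K₁ μ) (hK₂ : Integrable K₂ μ) (x : E) :
    ‖(f ⋆[lsmul ℝ ℝ, μ] K₁) x - (f ⋆[lsmul ℝ ℝ, μ] K₂) x‖ ≤ M * ∫ t, ‖K₁ t - K₂ t‖ ∂μ := by
  have integrable {K : E → H} (hK : Integrable K μ) : Integrable (fun t ↦ f t • K (x - t)) μ :=
    (hK.comp_sub_left x).bdd_smul M hf (.of_forall hfM)
  rw [convolution_lsmul, convolution_lsmul, ← integral_sub (integrable hK₁) (integrable hK₂),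
    ← integral_sub_left_eq_self (fun t ↦ ‖K₁ t - K₂ t‖) μ x, ← integral_const_mul]
  refine norm_integral_le_of_norm_le
    (((hK₁.sub hK₂).norm.comp_sub_left x).const_mul M) (.of_forall fun t ↦ ?_)
  rw [← smul_sub, norm_smul]
  exact mul_le_mul_of_nonneg_right (hfM t) (norm_nonneg _)

theorem tendstoUniformly_convolution {ι : Type*} {l : Filter ι} {K : ι → E → H} {K₀ : E → H}
    (hf : AEStronglyMeasurable f μ) (hfM : ∀ x, ‖f x‖ ≤ M) (hK : ∀ i, Integrable (K i) μ)
    (hK₀ : Integrable K₀ μ) (hlim : Tendsto (fun i ↦ ∫ t, ‖K₀ t - K i t‖ ∂μ) l (𝓝 0)) :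
    TendstoUniformly (fun i ↦ f ⋆[lsmul ℝ ℝ, μ] K i) (f ⋆[lsmul ℝ ℝ, μ] K₀) l := by
  rw [Metric.tendstoUniformly_iff]
  intro ε hε
  have hlimM := hlim.const_mul M
  rw [mul_zero] at hlimM
  filter_upwards [hlimM.eventually_lt_const hε] with i hi x
  rw [dist_eq_norm]
  exact (norm_convolution_sub_le hf hfM hK₀ (hK i) x).trans_lt hi

theorem hasFDerivAt_convolution_of_hasCompactSupport {g : E → H} (hf : LocallyIntegrable f μ)
    (hgs : HasCompactSupport g) (hg : ContDiff ℝ 1 g) (x : E) :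
    HasFDerivAt (f ⋆[lsmul ℝ ℝ, μ] g) ((f ⋆[lsmul ℝ ℝ, μ] fderiv ℝ g) x) x :=
  -- The library lemma has `(lsmul ℝ ℝ).precompR E`, which unfolds to `lsmul ℝ ℝ`.
  hgs.hasFDerivAt_convolution_right (lsmul ℝ ℝ) hf hg x

theorem hasFDerivAt_convolution_of_tendsto {ι : Type*} {l : Filter ι} [l.NeBot] {K : ι → E → H}
    {K₀ : E → H} {K₀' : E → E →L[ℝ] H} (hf : AEStronglyMeasurable f μ) (hfM : ∀ x, ‖f x‖ ≤ M)
    (hKs : ∀ i, HasCompactSupport (K i)) (hK : ∀ i, ContDiff ℝ 1 (K i))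
    (hK₀ : Integrable K₀ μ) (hK₀' : Integrable K₀' μ)
    (hlim : Tendsto (fun i ↦ ∫ t, ‖K₀ t - K i t‖ ∂μ) l (𝓝 0))
    (hlim' : Tendsto (fun i ↦ ∫ t, ‖K₀' t - fderiv ℝ (K i) t‖ ∂μ) l (𝓝 0)) (x : E) :
    HasFDerivAt (f ⋆[lsmul ℝ ℝ, μ] K₀) ((f ⋆[lsmul ℝ ℝ, μ] K₀') x) x := by
  have hfloc : LocallyIntegrable f μ :=
    (locallyIntegrable_const M).mono hf (.of_forall fun y ↦ (hfM y).trans (le_abs_self M))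
  have hKint (i) : Integrable (K i) μ := (hK i).continuous.integrable_of_hasCompactSupport (hKs i)
  have hKint' (i) : Integrable (fderiv ℝ (K i)) μ :=
    ((hK i).continuous_fderiv one_ne_zero).integrable_of_hasCompactSupport ((hKs i).fderiv ℝ)
  exact hasFDerivAt_of_tendstoUniformly (tendstoUniformly_convolution hf hfM hKint' hK₀' hlim')
    (fun i ↦ hasFDerivAt_convolution_of_hasCompactSupport hfloc (hKs i) (hK i))
    (fun y ↦ (tendstoUniformly_convolution hf hfM hKint hK₀ hlim).tendsto_at y) x

variable (μ) in
theorem tendsto_integral_norm_rpow_smul_comp_smul (g : E → H)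
    {s : ℝ} (hs : s < finrank ℝ E) :
    Tendsto (fun c : ℝ ↦ ∫ x, ‖c ^ s • g (c • x)‖ ∂μ) atTop (𝓝 0) := by
  have hlim : Tendsto (fun c : ℝ ↦ c ^ (-(finrank ℝ E - s)) * ∫ x, ‖g x‖ ∂μ) atTop (𝓝 0) := by
    simpa using (tendsto_rpow_neg_atTop (sub_pos.2 hs)).mul_const (∫ x, ‖g x‖ ∂μ)
  refine hlim.congr' ?_
  filter_upwards [eventually_gt_atTop 0] with c hc
  simp only [norm_smul, Real.norm_of_nonneg (Real.rpow_nonneg hc.le s)]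
  rw [integral_const_mul, Measure.integral_comp_smul_of_nonneg μ (fun x ↦ ‖g x‖) c (hR := hc.le),
    neg_sub, Real.rpow_sub hc, Real.rpow_natCast, smul_eq_mul, ← mul_assoc, div_eq_mul_inv]

end L1Approximation

theorem contDiff_smul_of_eventuallyEq_zero {ψ : E → ℝ} {F : E → H} {a : E} {n : WithTop ℕ∞}
    (hψ : ContDiff ℝ n ψ) (hψ₀ : ψ =ᶠ[𝓝 a] 0) (hF : ContDiffOn ℝ n F {a}ᶜ) :
    ContDiff ℝ n (ψ • F) := by
  rw [contDiff_iff_contDiffAt]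
  intro x
  rcases eq_or_ne x a with rfl | hx
  · refine (contDiffAt_const (c := (0 : H))).congr_of_eventuallyEq ?_
    filter_upwards [hψ₀] with y hy
    simp [hy]
  · exact hψ.contDiffAt.smul (hF.contDiffAt (isOpen_compl_singleton.mem_nhds hx))

section Cutoff

variable [FiniteDimensional ℝ E] (χ : ContDiffBump (0 : E)) {F : E → H} {c : ℝ}

theorem contDiff_one_sub_bump_smul {n : ℕ∞} (hF : ContDiffOn ℝ n F {0}ᶜ) :
    ContDiff ℝ n ((1 - ⇑χ) • F) :=
  contDiff_smul_of_eventuallyEq_zero (contDiff_const.sub χ.contDiff)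
    (χ.eventuallyEq_one.mono fun y hy ↦ by simp [hy]) hF

theorem contDiff_annulus_smul {n : ℕ∞} (hF : ContDiffOn ℝ n F {0}ᶜ) :
    ContDiff ℝ n ((⇑χ - fun y ↦ χ (c • y)) • F) := by
  have hscale : Tendsto (fun y : E ↦ c • y) (𝓝 0) (𝓝 0) := by
    simpa using (continuous_const_smul c).tendsto (0 : E)
  refine contDiff_smul_of_eventuallyEq_zero
    (χ.contDiff.sub (χ.contDiff.comp (contDiff_const_smul c))) ?_ hF
  filter_upwards [χ.eventuallyEq_one, hscale.eventually χ.eventuallyEq_one] with y hy hcy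
  simp [hy, hcy]

theorem hasCompactSupport_annulus_smul (hc : c ≠ 0) :
    HasCompactSupport ((⇑χ - fun y ↦ χ (c • y)) • F) :=
  (χ.hasCompactSupport.sub (χ.hasCompactSupport.comp_smul hc)).smul_right

end Cutoff

namespace IsPosHomogeneous

variable [FiniteDimensional ℝ E] {q : ℝ} {F : E → H} (χ : ContDiffBump (0 : E))

theorem bump_smul_sub_annulus (hF : IsPosHomogeneous q F) {c : ℝ} (hc : 0 < c) (x : E) :
    (⇑χ • F) x - ((⇑χ - fun y ↦ χ (c • y)) • F) x = c ^ (-q) • (⇑χ • F) (c • x) := by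
  simp only [Pi.smul_apply', Pi.sub_apply, hF c hc x, smul_smul, ← sub_smul]
  rw [_root_.sub_sub_cancel, mul_left_comm, ← Real.rpow_add hc, neg_add_cancel, Real.rpow_zero,
    mul_one]

theorem fderiv_bump_smul_sub_fderiv_annulus (hF : IsPosHomogeneous q F)
    (hdiff : ContDiffOn ℝ 1 F {0}ᶜ) {c : ℝ} (hc : 0 < c) {x : E} (hx : x ≠ 0) :
    _root_.fderiv ℝ (⇑χ • F) x - _root_.fderiv ℝ ((⇑χ - fun y ↦ χ (c • y)) • F) x =
      c ^ (1 - q) • _root_.fderiv ℝ (⇑χ • F) (c • x) := by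
  have hG : DifferentiableAt ℝ (⇑χ • F) x :=
    ((χ.contDiff.contDiffAt.smul (hdiff.contDiffAt (isOpen_compl_singleton.mem_nhds hx)))
      |>.differentiableAt one_ne_zero)
  have hA : DifferentiableAt ℝ ((⇑χ - fun y ↦ χ (c • y)) • F) x :=
    (contDiff_annulus_smul χ hdiff).differentiable one_ne_zero x
  have hsub : (⇑χ • F - (⇑χ - fun y ↦ χ (c • y)) • F) = c ^ (-q) • fun y ↦ (⇑χ • F) (c • y) :=
    funext (hF.bump_smul_sub_annulus χ hc)
  rw [← fderiv_sub hG hA, hsub, fderiv_const_smul_field, Pi.smul_apply, fderiv_comp_smul,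
    smul_smul, ← Real.rpow_add_one hc.ne', neg_add_eq_sub]

variable [MeasurableSpace E] [BorelSpace E] {μ : Measure E} [μ.IsAddHaarMeasure]

theorem integrable_bump_smul [Nontrivial E] (hF : IsPosHomogeneous q F)
    (hcont : ContinuousOn F {0}ᶜ) (hq : -(finrank ℝ E : ℝ) < q) : Integrable (⇑χ • F) μ :=
  (hF.locallyIntegrable hcont hq).integrable_smul_left_of_hasCompactSupport χ.continuous
    χ.hasCompactSupport

theorem integrable_fderiv_bump_smul [Nontrivial E] (hF : IsPosHomogeneous q F)
    (hdiff : ContDiffOn ℝ 1 F {0}ᶜ) (hq : 1 - (finrank ℝ E : ℝ) < q) :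
    Integrable (_root_.fderiv ℝ (⇑χ • F)) μ := by
  have hopen : IsOpen ({0}ᶜ : Set E) := isOpen_compl_singleton
  have hae : ∀ᵐ x ∂μ, x ∈ ({0}ᶜ : Set E) := compl_mem_ae_iff.2 (measure_singleton 0)
  have hχ : ContDiff ℝ 1 χ := χ.contDiff
  have hmeas : AEStronglyMeasurable (_root_.fderiv ℝ (⇑χ • F)) μ := by
    rw [← Measure.restrict_eq_self_of_ae_mem hae]
    exact ((hχ.contDiffOn.smul hdiff).continuousOn_fderiv_of_isOpen hopen
      le_rfl).aestronglyMeasurable hopen.measurableSet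
  have hχ_DF : Integrable (⇑χ • _root_.fderiv ℝ F) μ :=
    hF.fderiv.integrable_bump_smul χ (hdiff.continuousOn_fderiv_of_isOpen hopen le_rfl)
      (by linarith)
  have hDχ_F : Integrable (fun x ↦ ‖_root_.fderiv ℝ χ x‖ • F x) μ :=
    (hF.locallyIntegrable hdiff.continuousOn
      (by linarith)).integrable_smul_left_of_hasCompactSupport
      (hχ.continuous_fderiv one_ne_zero).norm (χ.hasCompactSupport.fderiv ℝ).norm
  refine (hχ_DF.norm.add hDχ_F.norm).mono' hmeas ?_
  filter_upwards [hae] with x hx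
  rw [fderiv_smul (hχ.differentiable one_ne_zero x)
    ((hdiff.contDiffAt (hopen.mem_nhds hx)).differentiableAt one_ne_zero)]
  refine (norm_add_le _ _).trans_eq ?_
  simp [ContinuousLinearMap.norm_smulRight_apply, norm_smul]

theorem hasFDerivAt_convolution_bump_smul [Nontrivial E] {f : E → ℝ} {M : ℝ}
    (hF : IsPosHomogeneous q F) (hdiff : ContDiffOn ℝ 1 F {0}ᶜ) (hq : 1 - (finrank ℝ E : ℝ) < q)
    (hf : AEStronglyMeasurable f μ) (hfM : ∀ x, ‖f x‖ ≤ M) (x : E) :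
    HasFDerivAt (f ⋆[lsmul ℝ ℝ, μ] (⇑χ • F))
      ((f ⋆[lsmul ℝ ℝ, μ] _root_.fderiv ℝ (⇑χ • F)) x) x := by
  have hpos (j : ℕ) : (0 : ℝ) < j + 1 := j.cast_add_one_pos
  have hscale : Tendsto (fun j : ℕ ↦ (j + 1 : ℝ)) atTop atTop :=
    tendsto_atTop_add_const_right _ _ tendsto_natCast_atTop_atTop
  have hae : ∀ᵐ x ∂μ, x ∈ ({0}ᶜ : Set E) := compl_mem_ae_iff.2 (measure_singleton 0)
  refine hasFDerivAt_convolution_of_tendsto (l := atTop)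
    (K := fun j : ℕ ↦ (⇑χ - fun y ↦ χ ((j + 1 : ℝ) • y)) • F) hf hfM
    (fun j ↦ hasCompactSupport_annulus_smul χ (hpos j).ne') (fun j ↦ contDiff_annulus_smul χ hdiff)
    (hF.integrable_bump_smul χ hdiff.continuousOn (by linarith))
    (hF.integrable_fderiv_bump_smul χ hdiff hq) ?_ ?_ x
  · simp only [hF.bump_smul_sub_annulus χ (hpos _)]
    exact (tendsto_integral_norm_rpow_smul_comp_smul μ _ (by linarith)).comp hscale
  · refine ((tendsto_integral_norm_rpow_smul_comp_smul μ (_root_.fderiv ℝ (⇑χ • F))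
      (by linarith : 1 - q < finrank ℝ E)).comp hscale).congr fun j ↦ integral_congr_ae ?_
    filter_upwards [hae] with x hx
    rw [hF.fderiv_bump_smul_sub_fderiv_annulus χ hdiff (hpos j) hx]

variable [Nontrivial E] {f : E → ℝ} {m : ℕ}

theorem contDiff_convolution_bump_smul_of_hasCompactSupport (hF : IsPosHomogeneous q F)
    (hdiff : ContDiffOn ℝ 1 F {0}ᶜ) (hq : 1 - (finrank ℝ E : ℝ) < q)
    (hf : ContDiff ℝ m f) (hfs : HasCompactSupport f) :
    ContDiff ℝ (m + 1) (f ⋆[lsmul ℝ ℝ, μ] (⇑χ • F)) := by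
  obtain ⟨M, hM⟩ := hfs.exists_bound_of_continuous hf.continuous
  have hint : Integrable (_root_.fderiv ℝ (⇑χ • F)) μ := hF.integrable_fderiv_bump_smul χ hdiff hq
  exact contDiff_succ_iff_hasFDerivAt.2
    ⟨_, hfs.contDiff_convolution_left (lsmul ℝ ℝ) (n := m) hf hint.locallyIntegrable,
      hF.hasFDerivAt_convolution_bump_smul χ hdiff hq hf.continuous.aestronglyMeasurable hM⟩

theorem contDiff_convolution_bump_smul (hF : IsPosHomogeneous q F)
    (hdiff : ContDiffOn ℝ 1 F {0}ᶜ) (hq : 1 - (finrank ℝ E : ℝ) < q)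
    (hf : ContDiff ℝ m f) : ContDiff ℝ (m + 1) (f ⋆[lsmul ℝ ℝ, μ] (⇑χ • F)) := by
  rw [contDiff_iff_contDiffAt]
  intro y
  let β : ContDiffBump y := ⟨χ.rOut + 1, χ.rOut + 2, by linarith [χ.rOut_pos], by linarith⟩
  have hsupp : Function.support (⇑χ • F) ⊆ closedBall 0 χ.rOut :=
    (Function.support_smul_subset_left _ _).trans (χ.support_eq.trans_subset ball_subset_closedBall)
  have hcut : EqOn f (⇑β * f) (ball y (χ.rOut + 1)) := fun t ht ↦ by
    simp [β.one_of_mem_closedBall (ball_subset_closedBall ht)]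
  exact (hF.contDiff_convolution_bump_smul_of_hasCompactSupport χ hdiff hq (β.contDiff.mul hf)
    β.hasCompactSupport.mul_right).contDiffAt.congr_of_eventuallyEq
    (convolution_eventuallyEq_of_eqOn_ball hsupp (lt_add_one _) hcut)

end IsPosHomogeneous

section PolynomialGrowth

theorem norm_iteratedFDeriv_fderiv_apply_le {K : E → H} {m k : ℕ} (hK : ContDiff ℝ (m + 1 : ℕ) K)
    (hk : k ≤ m) (w x : E) : ‖iteratedFDeriv ℝ k (fun y ↦ fderiv ℝ K y w) x‖ ≤
      ‖w‖ * ‖iteratedFDeriv ℝ (k + 1) K x‖ := by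
  have hK' : ContDiff ℝ m (fderiv ℝ K) := hK.fderiv_right le_rfl
  rw [← norm_iteratedFDeriv_fderiv]
  exact norm_iteratedFDeriv_clm_apply_const hK'.contDiffAt (by exact_mod_cast hk)

variable [MeasurableSpace E] [OpensMeasurableSpace E] [SecondCountableTopology E] {μ : Measure E}
  {p C : ℝ} {f : E → ℝ} {K : E → H}

theorem hasFDerivAt_convolution_of_norm_le {K' : E → E →L[ℝ] H} {C' : ℝ} (hp : 0 ≤ p)
    (hf : Integrable (fun x ↦ (1 + ‖x‖) ^ p * f x) μ) (hKK' : ∀ x, HasFDerivAt K (K' x) x)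
    (hK'c : Continuous K') (hK : ∀ x, ‖K x‖ ≤ C * (1 + ‖x‖) ^ p)
    (hK' : ∀ x, ‖K' x‖ ≤ C' * (1 + ‖x‖) ^ p) (y : E) :
    HasFDerivAt (f ⋆[lsmul ℝ ℝ, μ] K) ((f ⋆[lsmul ℝ ℝ, μ] K') y) y := by
  have hKc : Continuous K := continuous_iff_continuousAt.2 fun x ↦ (hKK' x).continuousAt
  refine hasFDerivAt_integral_of_dominated_of_fderiv_le (ball_mem_nhds y one_pos)
    (F := fun x t ↦ f t • K (x - t)) (F' := fun x t ↦ f t • K' (x - t))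
    (bound := fun t ↦ C' * (1 + (‖y‖ + 1)) ^ p * ‖(1 + ‖t‖) ^ p * f t‖)
    (.of_forall (aestronglyMeasurable_smul_comp_sub hf hKc))
    (convolutionExists_of_norm_le hp hf hKc hK y) (aestronglyMeasurable_smul_comp_sub hf hK'c y)
    (.of_forall fun t x hx ↦ norm_smul_comp_sub_le hp hK' (norm_lt_of_mem_ball hx).le t)
    (hf.norm.const_mul _) (.of_forall fun t x _ ↦ ?_)
  exact ((hasFDerivAt_comp_sub (x := x) t).2 (hKK' (x - t))).const_smul (f t)

variable [FiniteDimensional ℝ E]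

theorem contDiff_convolution_of_norm_iteratedFDeriv_le {m : ℕ} (hp : 0 ≤ p)
    (hf : Integrable (fun x ↦ (1 + ‖x‖) ^ p * f x) μ) (hKm : ContDiff ℝ m K)
    (hK : ∀ k ≤ m, ∃ C, ∀ x, ‖iteratedFDeriv ℝ k K x‖ ≤ C * (1 + ‖x‖) ^ p) :
    ContDiff ℝ m (f ⋆[lsmul ℝ ℝ, μ] K) := by
  induction m generalizing K with
  | zero =>
    obtain ⟨C, hC⟩ := hK 0 le_rfl
    simp only [norm_iteratedFDeriv_zero] at hC
    exact contDiff_zero.2 (continuous_convolution_of_norm_le hp hf hKm.continuous hC)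
  | succ m ih =>
    obtain ⟨C, hC⟩ := hK 0 (Nat.zero_le _)
    obtain ⟨C', hC'⟩ := hK 1 (Nat.succ_le_succ (Nat.zero_le m))
    simp only [norm_iteratedFDeriv_zero] at hC
    simp only [norm_iteratedFDeriv_one] at hC'
    have hKdiff : Differentiable ℝ K := hKm.differentiable (by simp)
    have hK'c : Continuous (fderiv ℝ K) := hKm.continuous_fderiv (by simp)
    have hderiv (y) := hasFDerivAt_convolution_of_norm_le hp hf (fun x ↦ (hKdiff x).hasFDerivAt)
      hK'c hC hC' y
    refine (contDiff_succ_iff_fderiv_apply (n := m)).2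
      ⟨fun y ↦ (hderiv y).differentiableAt, by simp, fun w ↦ ?_⟩
    have hdir : (fun y ↦ fderiv ℝ (f ⋆[lsmul ℝ ℝ, μ] K) y w) =
        f ⋆[lsmul ℝ ℝ, μ] fun x ↦ fderiv ℝ K x w := funext fun y ↦ by
      rw [(hderiv y).fderiv]
      exact ContinuousLinearMap.integral_apply (convolutionExists_of_norm_le hp hf hK'c hC' y) w
    rw [hdir]
    have hK'm : ContDiff ℝ m fun x ↦ fderiv ℝ K x w :=
      (hKm.fderiv_right le_rfl).clm_apply contDiff_const
    refine ih hK'm fun k hk ↦ ?_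
    obtain ⟨C, hC⟩ := hK (k + 1) (Nat.succ_le_succ hk)
    refine ⟨‖w‖ * C, fun x ↦ (norm_iteratedFDeriv_fderiv_apply_le hKm hk w x).trans ?_⟩
    rw [mul_assoc]
    exact mul_le_mul_of_nonneg_left (hC x) (norm_nonneg w)

end PolynomialGrowth

namespace IsPosHomogeneous

variable [FiniteDimensional ℝ E] {q : ℝ} {F : E → H}

theorem exists_norm_iteratedFDeriv_le (hF : IsPosHomogeneous q F) {k : ℕ}
    (hdiff : ContDiffOn ℝ k F {0}ᶜ) :
    ∃ C, 0 ≤ C ∧ ∀ x ≠ 0, ‖_root_.iteratedFDeriv ℝ k F x‖ ≤ C * ‖x‖ ^ (q - k) := by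
  have hopen : IsOpen ({0}ᶜ : Set E) := isOpen_compl_singleton
  exact (hF.iteratedFDeriv k).exists_norm_le <|
    (hdiff.continuousOn_iteratedFDerivWithin le_rfl hopen.uniqueDiffOn).congr
      fun x hx ↦ (iteratedFDerivWithin_of_isOpen k hopen hx).symm

theorem exists_norm_iteratedFDeriv_one_sub_bump_smul_le (hF : IsPosHomogeneous q F) (hq : 0 ≤ q)
    (χ : ContDiffBump (0 : E)) {k : ℕ} (hdiff : ContDiffOn ℝ k F {0}ᶜ) :
    ∃ C, ∀ x, ‖_root_.iteratedFDeriv ℝ k ((1 - ⇑χ) • F) x‖ ≤ C * (1 + ‖x‖) ^ q := by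
  have hG : Continuous (_root_.iteratedFDeriv ℝ k ((1 - ⇑χ) • F)) :=
    (contDiff_one_sub_bump_smul (n := k) χ hdiff).continuous_iteratedFDeriv'
  obtain ⟨A, hA⟩ := (isCompact_closedBall (0 : E) (max χ.rOut 1)).exists_bound_of_continuousOn
    hG.continuousOn
  obtain ⟨B, hB₀, hB⟩ := hF.exists_norm_iteratedFDeriv_le hdiff
  have hone (x : E) : 1 ≤ (1 + ‖x‖) ^ q := Real.one_le_rpow (by simp) hq
  refine ⟨max A B, fun x ↦ ?_⟩
  rcases le_or_gt ‖x‖ (max χ.rOut 1) with hx | hx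
  · calc _ ≤ A := hA x (mem_closedBall_zero_iff.2 hx)
      _ ≤ max A B := le_max_left _ _
      _ ≤ max A B * (1 + ‖x‖) ^ q := le_mul_of_one_le_right (hB₀.trans (le_max_right _ _)) (hone x)
  · obtain ⟨hxR, hx1⟩ := max_lt_iff.1 hx
    have hGF : (1 - ⇑χ) • F =ᶠ[𝓝 x] F := by
      filter_upwards [(isOpen_lt continuous_const continuous_norm).mem_nhds hxR] with y hy
      simp [χ.zero_of_le_dist (x := y) (by simpa using hy.le)]
    calc _ = ‖_root_.iteratedFDeriv ℝ k F x‖ := by rw [hGF.iteratedFDeriv ℝ k |>.eq_of_nhds]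
      _ ≤ B * ‖x‖ ^ (q - k) := hB x (norm_pos_iff.1 (one_pos.trans hx1))
      _ ≤ B * ‖x‖ ^ q := by gcongr; exacts [hx1.le, by simp]
      _ ≤ max A B * (1 + ‖x‖) ^ q := by gcongr; exacts [le_max_right _ _, by simp]

variable [Nontrivial E] [MeasurableSpace E] [BorelSpace E] {μ : Measure E} [μ.IsAddHaarMeasure]

theorem contDiff_convolution_succ (hF : IsPosHomogeneous q F) (hq : 0 < q) {m : ℕ}
    (hdiff : ContDiffOn ℝ (m + 1 : ℕ) F {0}ᶜ) {f : E → ℝ}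
    (hfint : Integrable (fun x ↦ (1 + ‖x‖) ^ q * f x) μ) (hf : ContDiff ℝ m f) :
    ContDiff ℝ (m + 1 : ℕ) (f ⋆[lsmul ℝ ℝ, μ] F) := by
  have χ : ContDiffBump (0 : E) := default
  have hdim : (1 : ℝ) ≤ finrank ℝ E := by exact_mod_cast finrank_pos (R := ℝ) (M := E)
  have hdiff₁ : ContDiffOn ℝ 1 F {0}ᶜ := hdiff.of_le (by simp)
  have hfar (k : ℕ) (hk : k ≤ m + 1) :
      ∃ C, ∀ x, ‖_root_.iteratedFDeriv ℝ k ((1 - ⇑χ) • F) x‖ ≤ C * (1 + ‖x‖) ^ q :=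
    hF.exists_norm_iteratedFDeriv_one_sub_bump_smul_le hq.le χ
      (hdiff.of_le (by exact_mod_cast hk))
  have hfar_contDiff : ContDiff ℝ (m + 1 : ℕ) ((1 - ⇑χ) • F) :=
    contDiff_one_sub_bump_smul (n := (m + 1 : ℕ)) χ hdiff
  have hnear_exists : ConvolutionExists f (⇑χ • F) (lsmul ℝ ℝ) μ :=
    χ.hasCompactSupport.smul_right.convolutionExists_right_of_continuous_left _ hf.continuous
      (hF.integrable_bump_smul χ hdiff.continuousOn (by linarith)).locallyIntegrable
  have hfar_exists : ConvolutionExists f ((1 - ⇑χ) • F) (lsmul ℝ ℝ) μ := by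
    obtain ⟨C, hC⟩ := hfar 0 (Nat.zero_le _)
    exact convolutionExists_of_norm_le hq.le hfint hfar_contDiff.continuous (by simpa using hC)
  have hsplit : f ⋆[lsmul ℝ ℝ, μ] F =
      f ⋆[lsmul ℝ ℝ, μ] (⇑χ • F) + f ⋆[lsmul ℝ ℝ, μ] ((1 - ⇑χ) • F) := by
    rw [← hnear_exists.distrib_add hfar_exists, ← add_smul, add_sub_cancel, one_smul]
  rw [hsplit]
  exact (hF.contDiff_convolution_bump_smul χ hdiff₁ (by linarith) hf).add
    (contDiff_convolution_of_norm_iteratedFDeriv_le hq.le hfint hfar_contDiff hfar)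

end IsPosHomogeneous

section Smoothness

variable {V : Type*} [NormedAddCommGroup V] [InnerProductSpace ℝ V]

theorem contDiffOn_norm_rpow (p : ℝ) (n : WithTop ℕ∞) :
    ContDiffOn ℝ n (fun x : V ↦ ‖x‖ ^ p) {0}ᶜ :=
  fun _ hx ↦ ((contDiffAt_norm ℝ hx).rpow_const_of_ne (norm_ne_zero_iff.2 hx)).contDiffWithinAt

variable [FiniteDimensional ℝ V] [MeasurableSpace V] [BorelSpace V] {μ : Measure V}
  [μ.IsAddHaarMeasure] {p : ℝ}

theorem contDiff_of_convolution_norm_rpow_eq [Nontrivial V] {u v : V → ℝ} {θ κ : ℝ} (hp : 0 < p)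
    (hupos : ∀ y, 0 < u y) (hvpos : ∀ x, 0 < v x)
    (hvint : Integrable (fun x ↦ (1 + ‖x‖) ^ p * v x ^ κ) μ)
    (huint : Integrable (fun x ↦ (1 + ‖x‖) ^ p * u x ^ θ) μ)
    (hu : (fun x ↦ v x ^ κ) ⋆[lsmul ℝ ℝ, μ] (fun x ↦ ‖x‖ ^ p) = u)
    (hv : (fun x ↦ u x ^ θ) ⋆[lsmul ℝ ℝ, μ] (fun x ↦ ‖x‖ ^ p) = v) (m : ℕ) :
    ContDiff ℝ m u ∧ ContDiff ℝ m v := by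
  induction m with
  | zero =>
    exact ⟨contDiff_zero.2 (hu ▸ continuous_convolution_norm_rpow hp.le hvint),
      contDiff_zero.2 (hv ▸ continuous_convolution_norm_rpow hp.le huint)⟩
  | succ m ih =>
    have gain {f w : V → ℝ} (hfint : Integrable (fun x ↦ (1 + ‖x‖) ^ p * f x) μ)
        (hw : f ⋆[lsmul ℝ ℝ, μ] (fun x ↦ ‖x‖ ^ p) = w) (hf : ContDiff ℝ m f) :
        ContDiff ℝ (m + 1 : ℕ) w := hw ▸
      (isPosHomogeneous_norm_rpow p).contDiff_convolution_succ hp (contDiffOn_norm_rpow p _) hfint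
        hf
    exact ⟨gain hvint hu (ih.2.rpow_const_of_ne fun x ↦ (hvpos x).ne'),
      gain huint hv (ih.1.rpow_const_of_ne fun x ↦ (hupos x).ne')⟩

theorem integral_system_smoothness_general {θ κ : ℝ} (hp : 0 < p) {u v : V → ℝ}
    (hu : Measurable u) (hv : Measurable v) (hupos : ∀ y, 0 < u y) (hvpos : ∀ x, 0 < v x)
    (hueq : ∀ y, ENNReal.ofReal (u y) = ∫⁻ x, ENNReal.ofReal (dist x y ^ p * v x ^ κ) ∂μ)
    (hveq : ∀ x, ENNReal.ofReal (v x) = ∫⁻ y, ENNReal.ofReal (dist x y ^ p * u y ^ θ) ∂μ) :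
    ContDiff ℝ (⊤ : ℕ∞) u ∧ ContDiff ℝ (⊤ : ℕ∞) v := by
  rcases subsingleton_or_nontrivial V with _ | _
  · have smooth (w : V → ℝ) : ContDiff ℝ (⊤ : ℕ∞) w := by
      rw [show w = fun _ ↦ w 0 from funext fun x ↦ congrArg w (Subsingleton.elim x 0)]
      exact contDiff_const
    exact ⟨smooth u, smooth v⟩
  obtain ⟨hvint, hu_conv⟩ := integrable_and_eq_convolution_of_integral_equation hp.le
    (hv.pow_const κ) (fun x ↦ (Real.rpow_pos_of_pos (hvpos x) κ).le) (fun y ↦ (hupos y).le) hueq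
  obtain ⟨huint, hv_conv⟩ := integrable_and_eq_convolution_of_integral_equation hp.le
    (hu.pow_const θ) (fun x ↦ (Real.rpow_pos_of_pos (hupos x) θ).le) (fun x ↦ (hvpos x).le)
    fun x ↦ by simpa only [dist_comm x] using hveq x
  have finite (m : ℕ) : ContDiff ℝ m u ∧ ContDiff ℝ m v :=
    contDiff_of_convolution_norm_rpow_eq hp hupos hvpos hvint huint hu_conv hv_conv m
  exact ⟨contDiff_infty.2 fun m ↦ (finite m).1, contDiff_infty.2 fun m ↦ (finite m).2⟩

end Smoothness

/-- **Smoothness of positive solutions of the integral system** (Lemma 3.5):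
for `1 ≤ n < α` and `θ, κ < 0`, if `(u, v)` is a pair of positive measurable solutions of
`u(y) = ∫ |x-y|^(α-n) v(x)^κ dx`, `v(x) = ∫ |x-y|^(α-n) u(y)^θ dy`, then
`u, v ∈ C^∞(ℝⁿ)`. -/
theorem integral_system_smoothness (n : ℕ) (hn : 1 ≤ n) (α θ κ : ℝ)
    (hα : (n : ℝ) < α) (hθ : θ < 0) (hκ : κ < 0)
    (u v : EuclideanSpace ℝ (Fin n) → ℝ)
    (hu : Measurable u) (hv : Measurable v)
    (hupos : ∀ y, 0 < u y) (hvpos : ∀ x, 0 < v x)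
    (hueq : ∀ y, ENNReal.ofReal (u y) =
      ∫⁻ x, ENNReal.ofReal (dist x y ^ (α - n) * v x ^ κ))
    (hveq : ∀ x, ENNReal.ofReal (v x) =
      ∫⁻ y, ENNReal.ofReal (dist x y ^ (α - n) * u y ^ θ)) :
    ContDiff ℝ (⊤ : ℕ∞) u ∧ ContDiff ℝ (⊤ : ℕ∞) v :=
  integral_system_smoothness_general (sub_pos.2 hα) hu hv hupos hvpos hueq hveq
end

section
/- Let 1 ≤ n < α and θ = κ = (n+α)/(n−α). Suppose (u, v) is a pair of positive, everywhere finite, smooth functions on ℝⁿ satisfying u(y) = ∫_{ℝⁿ}|x−y|^{α−n} v(x)^κ dx for all y ∈ ℝⁿ and v(x) = ∫_{ℝⁿ}|x−y|^{α−n} u(y)^θ dy for all x ∈ ℝⁿ. Then there exist constants c₁, c₂ > 0, d > 0 and a point ξ₀ ∈ ℝⁿ such that u(ξ) = c₁·(1/(|ξ−ξ₀|² + d²))^{(n−α)/2} and v(ξ) = c₂·(1/(|ξ−ξ₀|² + d²))^{(n−α)/2} for all ξ ∈ ℝⁿ. -/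
open MeasureTheory ENNReal

/-!
Write `p = α - n > 0` and `q = (n + α) / (α - n)`, so that `p q = p + 2 n`. With this relation
between the exponents the system is invariant under Kelvin transforms: for the sphere of centre `c`
and radius `R`, the difference between the Kelvin transform of `u` and `u` itself is the integral,
over the ball, of a positive kernel against `v ^ (-q)` minus the same power of the Kelvin transform
of `v`.

This identity drives the method of moving spheres. It defines a contraction when the set where the
Kelvin transform is the larger one has small measure, so both functions dominate their transforms
for small `R`, and this persists for slightly larger `R` as long as the domination is strict. Since
`u` grows exactly like `|x| ^ p` it must stop at a critical radius, where the identity forces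
equality for `u` and `v`. Comparing values at the centre, the critical radius determines `u c` and
`v c`, so `v` is a multiple of `u`, and a suitable power `f` of `u` is invariant under the Kelvin
transform of weight `2` about every centre `c`, with radius `√(f c)`.

Invariance about a minimum point `x₀` gives `f x ≥ |x - x₀|²`. Inserting this bound into the
invariance about an arbitrary centre shows that `f - |· - x₀|²` varies at most quadratically, hence
is constant.
-/

open EuclideanGeometry Set Filter Topology Metric Module

section RealInequality

variable {a b m q t M : ℝ}

lemma one_sub_mul_sub_one_le_rpow_neg (ht : 0 < t) (hq : 0 ≤ q) : 1 - q * (t - 1) ≤ t ^ (-q) := by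
  have hlog := mul_le_mul_of_nonneg_left (Real.log_le_sub_one_of_pos ht) hq
  have hexp := Real.add_one_le_exp (Real.log t * -q)
  rw [Real.rpow_def_of_pos ht]
  linarith

lemma rpow_neg_sub_rpow_neg_le (ha : 0 < a) (hb : 0 < b) (hq : 0 ≤ q) :
    a ^ (-q) - b ^ (-q) ≤ q * a ^ (-q - 1) * (b - a) := by
  have hscale : b ^ (-q) = a ^ (-q) * (b / a) ^ (-q) := by
    rw [← Real.mul_rpow ha.le (by positivity), mul_div_cancel₀ b ha.ne']
  have htangent := mul_le_mul_of_nonneg_left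
    (one_sub_mul_sub_one_le_rpow_neg (div_pos hb ha) hq) (Real.rpow_nonneg ha.le (-q))
  have hslope : q * a ^ (-q - 1) * (b - a) = a ^ (-q) * (q * (b / a - 1)) := by
    rw [Real.rpow_sub_one ha.ne']
    field_simp
  rw [hscale, hslope]
  linarith

lemma rpow_neg_sub_rpow_neg_le_of_le (hm : 0 < m) (hma : m ≤ a) (hab : a ≤ b)
    (hM : b - a ≤ M) (hq : 0 ≤ q) : a ^ (-q) - b ^ (-q) ≤ q * m ^ (-q - 1) * M := by
  have ha : 0 < a := hm.trans_le hma
  refine (rpow_neg_sub_rpow_neg_le ha (ha.trans_le hab) hq).trans ?_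
  have hslope : a ^ (-q - 1) ≤ m ^ (-q - 1) :=
    Real.rpow_le_rpow_of_nonpos hm hma (by linarith)
  have : 0 ≤ b - a := sub_nonneg.2 hab
  gcongr

end RealInequality

lemma isOpen_sep_lt {X : Type*} [TopologicalSpace X] {s : Set X} {f g : X → ℝ} (hs : IsOpen s)
    (hf : ContinuousOn f s) (hg : ContinuousOn g s) : IsOpen {x ∈ s | f x < g x} :=
  (hf.prodMk hg).isOpen_inter_preimage hs isOpen_lt_prod

section PuncturedBall

variable {X : Type*} [MetricSpace X] {R : ℝ} {c x : X}

lemma isOpen_ball_diff_center (c : X) (R : ℝ) : IsOpen (ball c R \ {c}) :=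
  isOpen_ball.sdiff isClosed_singleton

lemma ball_diff_center_mem_nhdsNE (c : X) (hR : 0 < R) : ball c R \ {c} ∈ 𝓝[≠] c :=
  sdiff_mem_nhdsWithin_compl (ball_mem_nhds c hR) _

lemma pos_of_mem_ball_diff_center (hx : x ∈ ball c R \ {c}) : 0 < R :=
  pos_of_mem_ball hx.1

end PuncturedBall

/-! ### Inversion and the Kelvin transform -/

section Kelvin

variable {E : Type*} [NormedAddCommGroup E] [InnerProductSpace ℝ E]
  {p s R : ℝ} {c x y : E} {u : E → ℝ}

/-- The Kelvin transform of weight `p` about the sphere of centre `c` and radius `R`. The weight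
is attached to `|x - c| / R`, so that for `p = α - n` it is the transform preserving the potentials
of the kernel `|x - y| ^ (α - n)`. -/
noncomputable def kelvin (p : ℝ) (c : E) (R : ℝ) (u : E → ℝ) (x : E) : ℝ :=
  (dist x c / R) ^ p * u (inversion c R x)

lemma kelvin_pos (hR : 0 < R) (hu : ∀ z, 0 < u z) (hx : x ≠ c) : 0 < kelvin p c R u x :=
  mul_pos (Real.rpow_pos_of_pos (div_pos (dist_pos.2 hx) hR) p) (hu _)

lemma kelvin_rpow (hR : 0 ≤ R) (hu : ∀ z, 0 ≤ u z) :
    kelvin p c R u x ^ s = kelvin (p * s) c R (fun z => u z ^ s) x := by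
  rw [kelvin, Real.mul_rpow (by positivity) (hu _), ← Real.rpow_mul (by positivity), kelvin]

lemma kelvin_div_const (A : ℝ) : kelvin p c R (fun z => u z / A) x = kelvin p c R u x / A :=
  (mul_div_assoc _ _ _).symm

lemma kelvin_kelvin (hR : 0 < R) (hx : x ≠ c) : kelvin p c R (kelvin p c R u) x = u x := by
  have hd := dist_pos.2 hx
  have hfactor : dist x c / R * (R ^ 2 / dist x c / R) = 1 := by field_simp
  rw [kelvin, kelvin, inversion_inversion c hR.ne', dist_inversion_center, ← mul_assoc,
    ← Real.mul_rpow (by positivity) (by positivity), hfactor, Real.one_rpow, one_mul]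

lemma kelvin_of_mem_sphere (hR : R ≠ 0) (hx : x ∈ sphere c R) : kelvin p c R u x = u x := by
  rw [kelvin, inversion_of_mem_sphere hx, mem_sphere.1 hx, div_self hR, Real.one_rpow, one_mul]

lemma inversion_mem_ball_diff_center_iff (hR : 0 < R) (hx : x ≠ c) :
    inversion c R x ∈ ball c R \ {c} ↔ R < dist x c := by
  have hd := dist_pos.2 hx
  rw [Set.mem_sdiff, mem_ball, dist_inversion_center, div_lt_iff₀ hd, pow_two,
    mul_lt_mul_iff_right₀ hR, mem_singleton_iff, inversion_eq_center hR.ne']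
  exact and_iff_left hx

lemma eqOn_kelvin_compl_center (hR : 0 < R)
    (h : EqOn (kelvin p c R u) u (ball c R \ {c})) : EqOn (kelvin p c R u) u {c}ᶜ := by
  intro x hx
  rcases lt_trichotomy (dist x c) R with hin | hon | hout
  · exact h ⟨hin, hx⟩
  · exact kelvin_of_mem_sphere hR.ne' hon
  · have hmem := (inversion_mem_ball_diff_center_iff hR hx).2 hout
    rw [kelvin, ← h hmem]
    exact kelvin_kelvin hR hx

lemma continuousAt_kelvin_uncurry (hu : Continuous u) (hR : R ≠ 0) (hx : x ≠ c) :
    ContinuousAt (fun z : ℝ × E => kelvin p c z.1 u z.2) (R, x) := by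
  refine ContinuousAt.mul (ContinuousAt.rpow_const ?_ (Or.inl ?_)) (hu.continuousAt.comp ?_)
  · exact ContinuousAt.div (by fun_prop) continuousAt_fst hR
  · exact div_ne_zero (dist_ne_zero.2 hx) hR
  · exact ContinuousAt.inversion continuousAt_const continuousAt_fst continuousAt_snd hx

lemma continuousOn_kelvin (hu : Continuous u) (hR : R ≠ 0) :
    ContinuousOn (kelvin p c R u) {c}ᶜ := fun x hx =>
  ((continuousAt_kelvin_uncurry (x := x) hu hR hx).comp
    (Continuous.prodMk_right R).continuousAt).continuousWithinAt

lemma continuousAt_kelvin_radius (hu : Continuous u) (hR : R ≠ 0) (hx : x ≠ c) :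
    ContinuousAt (fun r => kelvin p c r u x) R :=
  (continuousAt_kelvin_uncurry hu hR hx).comp (f := fun r : ℝ => (r, x))
    (Continuous.prodMk_left x).continuousAt

end Kelvin

section ReflectedDist

variable {E : Type*} [NormedAddCommGroup E] [InnerProductSpace ℝ E] {p R : ℝ} {c x y : E}

/-- The Kelvin transform, of weight `1` and in the variable `x`, of the distance to `y`. -/
noncomputable def reflectedDist (c : E) (R : ℝ) (x y : E) : ℝ :=
  dist x c / R * dist (inversion c R x) y

lemma reflectedDist_nonneg (hR : 0 ≤ R) : 0 ≤ reflectedDist c R x y :=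
  mul_nonneg (div_nonneg dist_nonneg hR) dist_nonneg

lemma dist_inversion_right (hR : 0 < R) (hx : x ≠ c) (hy : y ≠ c) :
    dist x (inversion c R y) = R / dist y c * reflectedDist c R x y := by
  have hyc := dist_pos.2 hy
  rw [reflectedDist, eq_comm]
  field_simp
  linarith [dist_inversion_mul_dist_center_eq (R := R) hx hy]

lemma reflectedDist_inversion_right (hR : 0 < R) (hx : x ≠ c) (hy : y ≠ c) :
    reflectedDist c R x (inversion c R y) = R / dist y c * dist x y := by
  have hxc := dist_pos.2 hx
  rw [reflectedDist, dist_inversion_inversion hx hy]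
  field_simp

lemma reflectedDist_sq_sub_dist_sq (hR : 0 < R) (hx : x ≠ c) :
    reflectedDist c R x y ^ 2 - dist x y ^ 2
      = (R ^ 2 - dist x c ^ 2) * (R ^ 2 - dist y c ^ 2) / R ^ 2 := by
  have hxc : 0 < ‖x - c‖ := norm_sub_pos_iff.2 hx
  have hinv : dist (inversion c R x) y = ‖(R / ‖x - c‖) ^ 2 • (x - c) - (y - c)‖ := by
    rw [dist_eq_norm, ← sub_sub_sub_cancel_right _ y c, ← vsub_eq_sub _ c, inversion_vsub_center,
      vsub_eq_sub, dist_eq_norm]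
  have hxy : dist x y = ‖(x - c) - (y - c)‖ := by rw [dist_eq_norm, sub_sub_sub_cancel_right]
  rw [reflectedDist, hinv, hxy, dist_eq_norm x c, dist_eq_norm y c]
  generalize x - c = X at hxc ⊢
  generalize y - c = Y
  rw [mul_pow, norm_sub_sq_real, norm_sub_sq_real, norm_smul, real_inner_smul_left,
    Real.norm_of_nonneg (by positivity)]
  field_simp
  ring

lemma dist_lt_reflectedDist (hx : x ∈ ball c R \ {c}) (hy : y ∈ ball c R) :
    dist x y < reflectedDist c R x y := by
  have hR : 0 < R := pos_of_mem_ball hy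
  have hxR : 0 < R ^ 2 - dist x c ^ 2 := sub_pos.2 (by gcongr; exact hx.1)
  have hyR : 0 < R ^ 2 - dist y c ^ 2 := sub_pos.2 (by gcongr; exact hy)
  have hdiff : 0 < reflectedDist c R x y ^ 2 - dist x y ^ 2 := by
    rw [reflectedDist_sq_sub_dist_sq hR hx.2]
    positivity
  exact lt_of_pow_lt_pow_left₀ 2 (reflectedDist_nonneg hR.le) (sub_pos.1 hdiff)

lemma reflectedDist_le (hx : x ∈ ball c R \ {c}) (hy : y ∈ ball c R) :
    reflectedDist c R x y ≤ 2 * R := by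
  have hR : 0 < R := pos_of_mem_ball hy
  have hxc : 0 < dist x c := dist_pos.2 hx.2
  have hxR : dist x c ≤ R := (mem_ball.1 hx.1).le
  have hyR : dist y c ≤ R := (mem_ball.1 hy).le
  calc reflectedDist c R x y
      ≤ dist x c / R * (R ^ 2 / dist x c + dist y c) := by
        rw [reflectedDist, ← dist_inversion_center]
        gcongr
        exact dist_triangle_right _ _ _
    _ = R + dist x c / R * dist y c := by field_simp
    _ ≤ R + R / R * R := by gcongr
    _ = 2 * R := by rw [div_self hR.ne']; ring

/-- The difference between the kernel `|x - y| ^ p` and its Kelvin transform in `x`. -/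
noncomputable def kelvinKernel (p : ℝ) (c : E) (R : ℝ) (x y : E) : ℝ :=
  reflectedDist c R x y ^ p - dist x y ^ p

lemma kelvinKernel_inversion_right (hR : 0 < R) (hx : x ≠ c) (hy : y ≠ c) :
    kelvinKernel p c R x (inversion c R y) = -((R / dist y c) ^ p * kelvinKernel p c R x y) := by
  rw [kelvinKernel, dist_inversion_right hR hx hy, reflectedDist_inversion_right hR hx hy,
    Real.mul_rpow (by positivity) dist_nonneg,
    Real.mul_rpow (by positivity) (reflectedDist_nonneg hR.le), kelvinKernel]
  ring

lemma kelvinKernel_pos (hp : 0 < p) (hx : x ∈ ball c R \ {c}) (hy : y ∈ ball c R) :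
    0 < kelvinKernel p c R x y :=
  sub_pos.2 (Real.rpow_lt_rpow dist_nonneg (dist_lt_reflectedDist hx hy) hp)

lemma kelvinKernel_le (hp : 0 ≤ p) (hx : x ∈ ball c R \ {c}) (hy : y ∈ ball c R) :
    kelvinKernel p c R x y ≤ (2 * R) ^ p :=
  (sub_le_self _ (by positivity)).trans <| Real.rpow_le_rpow
    (reflectedDist_nonneg (pos_of_mem_ball hy).le) (reflectedDist_le hx hy) hp

end ReflectedDist

/-! ### Riesz potentials with a growing kernel -/

section KernelBounds

variable {X : Type*} [PseudoMetricSpace X] {p : ℝ}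

lemma dist_rpow_le_one_add_dist_rpow_mul (hp : 0 ≤ p) (x y c : X) :
    dist x y ^ p ≤ (1 + dist y c) ^ p * (1 + dist x c) ^ p := by
  rw [← Real.mul_rpow (by positivity) (by positivity)]
  gcongr
  linarith [dist_triangle_right x y c, mul_nonneg (dist_nonneg (x := y) (y := c))
    (dist_nonneg (x := x) (y := c))]

lemma one_add_dist_rpow_le (hp : 0 ≤ p) {a b : X} (hab : 0 < dist a b) (x c : X) :
    (1 + dist x c) ^ p
      ≤ (1 + 2 * (1 + dist a c) / dist a b) ^ p * (dist x a ^ p + dist x b ^ p) := by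
  set m := max (dist x a) (dist x b)
  have hm : 0 ≤ m := dist_nonneg.trans (le_max_left _ _)
  have ha : dist x a ≤ m := le_max_left _ _
  have hb : dist x b ≤ m := le_max_right _ _
  have hone : 1 ≤ 2 * m / dist a b := by
    rw [le_div_iff₀ hab]
    linarith [dist_triangle_left a b x]
  have hlin : 1 + dist x c ≤ (1 + 2 * (1 + dist a c) / dist a b) * m := by
    calc 1 + dist x c ≤ m + 1 * (1 + dist a c) := by linarith [dist_triangle x a c]
      _ ≤ m + 2 * m / dist a b * (1 + dist a c) := by gcongr
      _ = (1 + 2 * (1 + dist a c) / dist a b) * m := by ring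
  have hmax : m ^ p ≤ dist x a ^ p + dist x b ^ p := by
    have hap : 0 ≤ dist x a ^ p := by positivity
    have hbp : 0 ≤ dist x b ^ p := by positivity
    rcases max_choice (dist x a) (dist x b) with h | h <;> simp only [m, h] <;> linarith
  calc (1 + dist x c) ^ p ≤ ((1 + 2 * (1 + dist a c) / dist a b) * m) ^ p := by gcongr
    _ = (1 + 2 * (1 + dist a c) / dist a b) ^ p * m ^ p := Real.mul_rpow (by positivity) hm
    _ ≤ _ := by gcongr

lemma dist_div_dist_le_one_add_dist {c y : X} (hy : 1 ≤ dist y c) (x : X) :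
    dist x y / dist y c ≤ 1 + dist x c := by
  rw [div_le_iff₀ (by linarith)]
  linarith [dist_triangle_right x y c,
    mul_nonneg (dist_nonneg (x := x) (y := c)) (sub_nonneg.2 hy)]

lemma tendsto_dist_div_dist_cobounded (x c : X) :
    Tendsto (fun y => dist x y / dist y c) (Bornology.cobounded X) (𝓝 1) := by
  have hdist := tendsto_dist_right_cobounded_atTop c
  refine tendsto_iff_dist_tendsto_zero.2 (squeeze_zero' (.of_forall fun _ => dist_nonneg) ?_
    (hdist.const_div_atTop (dist x c)))
  filter_upwards [hdist.eventually_gt_atTop 0] with y hy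
  rw [Real.dist_eq, div_sub_one hy.ne', abs_div, abs_of_pos hy, dist_comm y c]
  gcongr
  exact abs_dist_sub_le x c y

end KernelBounds

section LintegralEquation

variable {Ω : Type*} [MeasurableSpace Ω] {μ : Measure Ω} {f : Ω → ℝ} {a : ℝ}

lemma integrable_of_ofReal_eq_lintegral (hf : AEStronglyMeasurable f μ) (hf0 : 0 ≤ᵐ[μ] f)
    (h : ENNReal.ofReal a = ∫⁻ x, ENNReal.ofReal (f x) ∂μ) : Integrable f μ :=
  ⟨hf, (hasFiniteIntegral_iff_ofReal hf0).2 (h ▸ ofReal_lt_top)⟩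

lemma eq_integral_of_ofReal_eq_lintegral (hf : AEStronglyMeasurable f μ) (hf0 : 0 ≤ᵐ[μ] f)
    (ha : 0 ≤ a) (h : ENNReal.ofReal a = ∫⁻ x, ENNReal.ofReal (f x) ∂μ) : a = ∫ x, f x ∂μ := by
  rw [integral_eq_lintegral_of_nonneg_ae hf0 hf, ← h, toReal_ofReal ha]

end LintegralEquation

section Potential

variable {X : Type*} [PseudoMetricSpace X] [MeasurableSpace X] {μ : Measure X} {p : ℝ} {g : X → ℝ}

/-- The Riesz potential of the density `g` for the kernel `|x - y| ^ p`. In dimension `n` this is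
the potential of order `α = n + p`; here `p > 0`, so that the kernel grows at infinity. -/
noncomputable def rieszPotential (μ : Measure X) (p : ℝ) (g : X → ℝ) (y : X) : ℝ :=
  ∫ x, dist x y ^ p * g x ∂μ

lemma integrable_of_integrable_one_add_dist_rpow_mul (hp : 0 ≤ p)
    (hg : AEStronglyMeasurable g μ) {c : X}
    (h : Integrable (fun x => (1 + dist x c) ^ p * g x) μ) : Integrable g μ := by
  refine h.mono hg (ae_of_all _ fun x => ?_)
  rw [norm_mul]
  refine le_mul_of_one_le_left (norm_nonneg _) ?_
  rw [Real.norm_of_nonneg (by positivity)]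
  exact Real.one_le_rpow (by simp) hp

lemma rieszPotential_le (hp : 0 ≤ p) (hg : ∀ x, 0 ≤ g x) {c : X}
    (h : Integrable (fun x => (1 + dist x c) ^ p * g x) μ) (y : X) :
    rieszPotential μ p g y ≤ (1 + dist y c) ^ p * ∫ x, (1 + dist x c) ^ p * g x ∂μ := by
  rw [rieszPotential, ← integral_const_mul]
  refine integral_mono_of_nonneg (ae_of_all _ fun x => mul_nonneg (by positivity) (hg x))
    (h.const_mul _) (ae_of_all _ fun x => ?_)
  simp only [← mul_assoc]
  exact mul_le_mul_of_nonneg_right (dist_rpow_le_one_add_dist_rpow_mul hp x y c) (hg x)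

variable [OpensMeasurableSpace X]

lemma aestronglyMeasurable_dist_rpow_mul (hg : AEStronglyMeasurable g μ) (y : X) :
    AEStronglyMeasurable (fun x => dist x y ^ p * g x) μ :=
  (by fun_prop : Measurable fun x => dist x y ^ p).aestronglyMeasurable.mul hg

lemma integrable_and_eq_rieszPotential_of_lintegral {u : X → ℝ}
    (hg : AEStronglyMeasurable g μ) (hg0 : ∀ x, 0 ≤ g x) (hu : ∀ y, 0 ≤ u y)
    (h : ∀ y, ENNReal.ofReal (u y) = ∫⁻ x, ENNReal.ofReal (dist x y ^ p * g x) ∂μ) :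
    (∀ y, Integrable (fun x => dist x y ^ p * g x) μ) ∧ u = rieszPotential μ p g := by
  have hmeas := aestronglyMeasurable_dist_rpow_mul (p := p) hg
  have hnonneg : ∀ y, 0 ≤ᵐ[μ] fun x => dist x y ^ p * g x := fun y =>
    ae_of_all _ fun x => mul_nonneg (by positivity) (hg0 x)
  exact ⟨fun y => integrable_of_ofReal_eq_lintegral (hmeas y) (hnonneg y) (h y),
    funext fun y => eq_integral_of_ofReal_eq_lintegral (hmeas y) (hnonneg y) (hu y) (h y)⟩

lemma integrable_one_add_dist_rpow_mul (hp : 0 ≤ p) (hg : AEStronglyMeasurable g μ) {a b : X}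
    (hab : 0 < dist a b) (ha : Integrable (fun x => dist x a ^ p * g x) μ)
    (hb : Integrable (fun x => dist x b ^ p * g x) μ) (c : X) :
    Integrable (fun x => (1 + dist x c) ^ p * g x) μ := by
  have hweight : Measurable fun x => (1 + dist x c) ^ p := by fun_prop
  refine ((ha.norm.add hb.norm).const_mul ((1 + 2 * (1 + dist a c) / dist a b) ^ p)).mono'
    (hweight.aestronglyMeasurable.mul hg) (ae_of_all _ fun x => ?_)
  have hnorm : ∀ z, ‖dist x z ^ p‖ = dist x z ^ p := fun z => Real.norm_of_nonneg (by positivity)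
  simp only [Pi.add_apply, norm_mul, hnorm]
  rw [Real.norm_of_nonneg (by positivity : 0 ≤ (1 + dist x c) ^ p), ← add_mul, ← mul_assoc]
  gcongr
  exact one_add_dist_rpow_le hp hab x c

lemma continuous_rieszPotential (hp : 0 ≤ p) (hg : AEStronglyMeasurable g μ) {c : X}
    (h : Integrable (fun x => (1 + dist x c) ^ p * g x) μ) :
    Continuous (rieszPotential μ p g) := by
  refine continuous_iff_continuousAt.2 fun y₀ => ?_
  have hnear : ∀ᶠ y in 𝓝 y₀, dist y c < dist y₀ c + 1 :=
    (by fun_prop : ContinuousAt (fun y => dist y c) y₀).eventually_lt_const (lt_add_one _)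
  refine continuousAt_of_dominated
    (.of_forall fun y => aestronglyMeasurable_dist_rpow_mul hg y) ?_
    (h.norm.const_mul ((1 + (dist y₀ c + 1)) ^ p)) (ae_of_all _ fun x => ?_)
  · filter_upwards [hnear] with y hy
    refine ae_of_all _ fun x => ?_
    rw [norm_mul, norm_mul, ← mul_assoc]
    refine mul_le_mul_of_nonneg_right ?_ (norm_nonneg _)
    rw [Real.norm_of_nonneg (by positivity), Real.norm_of_nonneg (by positivity)]
    refine (dist_rpow_le_one_add_dist_rpow_mul hp x y c).trans ?_
    gcongr
  · exact ((by fun_prop : Continuous fun y => dist x y).rpow_const fun _ => Or.inr hp).mul_const _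
      |>.continuousAt

lemma tendsto_rieszPotential_div_dist_rpow (hp : 0 ≤ p) (hg : AEStronglyMeasurable g μ) {c : X}
    (h : Integrable (fun x => (1 + dist x c) ^ p * g x) μ) :
    Tendsto (fun y => rieszPotential μ p g y / dist y c ^ p) (Bornology.cobounded X)
      (𝓝 (∫ x, g x ∂μ)) := by
  have hcount : (Bornology.cobounded X).IsCountablyGenerated := by
    rw [← comap_dist_right_atTop c]
    infer_instance
  have hrw : (fun y => rieszPotential μ p g y / dist y c ^ p)
      = fun y => ∫ x, (dist x y / dist y c) ^ p * g x ∂μ := by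
    ext y
    simp only [rieszPotential, ← integral_div, mul_div_right_comm,
      Real.div_rpow dist_nonneg dist_nonneg]
  rw [hrw]
  refine tendsto_integral_filter_of_dominated_convergence _ (.of_forall fun y => ?_) ?_ h.norm
    (ae_of_all _ fun x => ?_)
  · exact (by fun_prop : Measurable fun x => (dist x y / dist y c) ^ p).aestronglyMeasurable.mul hg
  · filter_upwards [(tendsto_dist_right_cobounded_atTop c).eventually_ge_atTop 1] with y hy
    refine ae_of_all _ fun x => ?_
    rw [norm_mul, norm_mul]
    refine mul_le_mul_of_nonneg_right ?_ (norm_nonneg _)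
    rw [Real.norm_of_nonneg (by positivity), Real.norm_of_nonneg (by positivity)]
    gcongr
    exact dist_div_dist_le_one_add_dist hy x
  · simpa using ((tendsto_dist_div_dist_cobounded x c).rpow_const
      (Or.inl one_ne_zero)).mul_const (g x)

end Potential

/-! ### Kelvin covariance of the potential -/

section InversionIntegral

variable {E : Type*} [NormedAddCommGroup E] [InnerProductSpace ℝ E] {R : ℝ} {c : E}

lemma image_inversion_ball_diff_center (hR : 0 < R) :
    inversion c R '' (ball c R \ {c}) = (closedBall c R)ᶜ := by
  have hpre : ∀ x, inversion c R x ∈ ball c R \ {c} ↔ x ∈ (closedBall c R)ᶜ := by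
    intro x
    rcases eq_or_ne x c with rfl | hx
    · simp [hR.le]
    · rw [inversion_mem_ball_diff_center_iff hR hx, mem_compl_iff, mem_closedBall, not_le]
  rw [image_eq_preimage_of_inverse (inversion_inversion c hR.ne') (inversion_inversion c hR.ne')]
  exact Set.ext hpre

variable [FiniteDimensional ℝ E]

lemma abs_det_smul_reflection (k : ℝ) (K : Submodule ℝ E) :
    |(k • (K.reflection : E →L[ℝ] E)).det| = |k| ^ finrank ℝ E := by
  change |LinearMap.det (k • K.reflection.toLinearMap)| = _
  rw [LinearMap.det_smul, abs_mul, Submodule.det_reflection, abs_pow, abs_pow, abs_neg, abs_one,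
    one_pow, mul_one]

variable [MeasurableSpace E] [BorelSpace E] {μ : Measure E} [μ.IsAddHaarMeasure] {F : E → ℝ}

lemma integrableOn_image_inversion_iff (hR : 0 < R) :
    IntegrableOn F (inversion c R '' (ball c R \ {c})) μ ↔
      IntegrableOn (fun x => (R / dist x c) ^ (2 * finrank ℝ E) * F (inversion c R x))
        (ball c R \ {c}) μ := by
  rw [integrableOn_image_iff_integrableOn_abs_det_fderiv_smul μ
    (isOpen_ball_diff_center c R).measurableSet
    (fun x hx => (hasFDerivAt_inversion hx.2).hasFDerivWithinAt)
    (inversion_injective c hR.ne').injOn]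
  simp only [abs_det_smul_reflection, abs_pow, sq_abs, ← pow_mul, smul_eq_mul]

lemma setIntegral_image_inversion (hR : 0 < R) :
    ∫ x in inversion c R '' (ball c R \ {c}), F x ∂μ =
      ∫ x in ball c R \ {c}, (R / dist x c) ^ (2 * finrank ℝ E) * F (inversion c R x) ∂μ := by
  rw [integral_image_eq_integral_abs_det_fderiv_smul μ
    (isOpen_ball_diff_center c R).measurableSet
    (fun x hx => (hasFDerivAt_inversion hx.2).hasFDerivWithinAt)
    (inversion_injective c hR.ne').injOn]
  simp only [abs_det_smul_reflection, abs_pow, sq_abs, ← pow_mul, smul_eq_mul]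

lemma integral_eq_setIntegral_add_inversion [Nontrivial E] (hR : 0 < R) (hF : Integrable F μ) :
    ∫ x, F x ∂μ = ∫ x in ball c R \ {c},
      (F x + (R / dist x c) ^ (2 * finrank ℝ E) * F (inversion c R x)) ∂μ := by
  have hball : (ball c R \ {c} : Set E) =ᵐ[μ] closedBall c R :=
    (sdiff_null_ae_eq_self (measure_singleton c)).trans
      (ae_eq_of_subset_of_measure_ge ball_subset_closedBall
        (Measure.addHaar_closedBall_eq_addHaar_ball μ c R).le measurableSet_ball.nullMeasurableSet
        measure_closedBall_lt_top.ne)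
  rw [integral_add hF.integrableOn ((integrableOn_image_inversion_iff hR).1 hF.integrableOn),
    ← setIntegral_image_inversion hR, image_inversion_ball_diff_center hR,
    setIntegral_congr_set hball, integral_add_compl measurableSet_closedBall hF]

end InversionIntegral

section KelvinPotential

variable {E : Type*} [NormedAddCommGroup E] [InnerProductSpace ℝ E] {p R : ℝ} {c x y : E}
  {g : E → ℝ}

lemma kelvinKernel_mul_eq (hR : 0 ≤ R) (y : E) :
    kelvinKernel p c R x y * g y
      = (dist x c / R) ^ p * (dist y (inversion c R x) ^ p * g y) - dist y x ^ p * g y := by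
  rw [kelvinKernel, reflectedDist, Real.mul_rpow (by positivity) dist_nonneg, dist_comm _ y,
    dist_comm x y]
  ring

lemma jacobian_mul_kelvinKernel_inversion (n : ℕ) (hR : 0 < R) (hx : x ≠ c) (hy : y ≠ c) :
    (R / dist y c) ^ (2 * n) * (kelvinKernel p c R x (inversion c R y) * g (inversion c R y))
      = -(kelvinKernel p c R x y * kelvin (-(p + 2 * n)) c R g y) := by
  have hdy : 0 < dist y c := dist_pos.2 hy
  have hweight : (dist y c / R) ^ (-(p + 2 * n))
      = (R / dist y c) ^ p * (R / dist y c) ^ (2 * n) := by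
    rw [Real.rpow_neg (by positivity), ← Real.inv_rpow (by positivity), inv_div,
      Real.rpow_add (by positivity)]
    norm_cast
  rw [kelvinKernel_inversion_right hR hx hy, kelvin, hweight]
  ring

variable [MeasurableSpace E] {μ : Measure E}

lemma integrable_kelvinKernel_mul (hR : 0 ≤ R)
    (hg : ∀ z, Integrable (fun y => dist y z ^ p * g y) μ) (x : E) :
    Integrable (fun y => kelvinKernel p c R x y * g y) μ := by
  simp only [kelvinKernel_mul_eq hR]
  exact ((hg _).const_mul _).sub (hg x)

lemma kelvin_rieszPotential_sub (hR : 0 ≤ R)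
    (hg : ∀ z, Integrable (fun y => dist y z ^ p * g y) μ) (x : E) :
    kelvin p c R (rieszPotential μ p g) x - rieszPotential μ p g x
      = ∫ y, kelvinKernel p c R x y * g y ∂μ := by
  simp only [kelvinKernel_mul_eq hR]
  rw [integral_sub ((hg _).const_mul _) (hg x), integral_const_mul, kelvin, rieszPotential,
    rieszPotential]

variable [FiniteDimensional ℝ E] [BorelSpace E] [μ.IsAddHaarMeasure]

lemma integrableOn_kelvinKernel_mul_sub_kelvin (hR : 0 < R)
    (hg : ∀ z, Integrable (fun y => dist y z ^ p * g y) μ) (hx : x ≠ c) :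
    IntegrableOn (fun y => kelvinKernel p c R x y *
      (g y - kelvin (-(p + 2 * finrank ℝ E)) c R g y)) (ball c R \ {c}) μ := by
  have hF := integrable_kelvinKernel_mul (c := c) hR.le hg x
  refine (hF.integrableOn.add ((integrableOn_image_inversion_iff hR).1 hF.integrableOn)).congr_fun
    (fun y hy => ?_) (isOpen_ball_diff_center c R).measurableSet
  rw [Pi.add_apply, jacobian_mul_kelvinKernel_inversion _ hR hx hy.2]
  ring

/- The two halves of the kernel integral, inside and outside the sphere, combine because the
kernel is antisymmetric under inversion in `y`. -/
lemma kelvin_rieszPotential_sub_eq_setIntegral [Nontrivial E] (hR : 0 < R)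
    (hg : ∀ z, Integrable (fun y => dist y z ^ p * g y) μ) (hx : x ≠ c) :
    kelvin p c R (rieszPotential μ p g) x - rieszPotential μ p g x
      = ∫ y in ball c R \ {c}, kelvinKernel p c R x y *
          (g y - kelvin (-(p + 2 * finrank ℝ E)) c R g y) ∂μ := by
  rw [kelvin_rieszPotential_sub hR.le hg,
    integral_eq_setIntegral_add_inversion hR (integrable_kelvinKernel_mul hR.le hg x)]
  refine setIntegral_congr_fun (isOpen_ball_diff_center c R).measurableSet fun y hy => ?_
  simp only [jacobian_mul_kelvinKernel_inversion _ hR hx hy.2]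
  ring

end KelvinPotential

/-! ### Spheres on which `u` dominates its Kelvin transform -/

section KelvinRadii

variable {E : Type*} [NormedAddCommGroup E] [InnerProductSpace ℝ E]
  {p m R C : ℝ} {c x : E} {u : E → ℝ}

lemma kelvin_le_of_le_one_add_dist_rpow_mul (hp : 0 ≤ p) (hC : 0 ≤ C)
    (hu : ∀ y, u y ≤ (1 + dist y c) ^ p * C) (hx : x ∈ ball c R \ {c}) :
    kelvin p c R u x ≤ (1 + R) ^ p * C := by
  have hR : 0 < R := pos_of_mem_ball_diff_center hx
  have hxc : 0 < dist x c := dist_pos.2 hx.2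
  have hle : dist x c / R ≤ 1 := (div_le_one hR).2 (mem_ball.1 hx.1).le
  calc kelvin p c R u x
      ≤ (dist x c / R) ^ p * ((1 + R ^ 2 / dist x c) ^ p * C) := by
        rw [kelvin, ← dist_inversion_center]
        gcongr
        exact hu _
    _ = (dist x c / R + R) ^ p * C := by
        rw [← mul_assoc, ← Real.mul_rpow (by positivity) (by positivity)]
        congr 2
        field_simp
    _ ≤ (1 + R) ^ p * C := by gcongr

lemma tendsto_kelvin_nhdsNE_center (hR : 0 < R)
    (hu : Tendsto (fun y => u y / dist y c ^ p) (Bornology.cobounded E) (𝓝 m)) :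
    Tendsto (kelvin p c R u) (𝓝[≠] c) (𝓝 (m * R ^ p)) := by
  refine ((hu.comp (tendsto_inversion_nhdsNE_center_cobounded hR.ne')).mul_const
    (R ^ p)).congr' ?_
  filter_upwards [self_mem_nhdsWithin] with x hx
  have hxc : 0 < dist x c := dist_pos.2 hx
  have hdist : R ^ 2 / dist x c = R * (dist x c / R)⁻¹ := by field_simp
  have : 0 < (dist x c / R) ^ p := by positivity
  rw [Function.comp_apply, dist_inversion_center, kelvin, hdist,
    Real.mul_rpow hR.le (by positivity), Real.inv_rpow (by positivity)]
  field_simp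

/-- The set where `u` lies strictly below its Kelvin transform inside the sphere of inversion;
the method of moving spheres shows that it is empty for suitable radii. -/
def kelvinExcessSet (p : ℝ) (c : E) (R : ℝ) (u : E → ℝ) : Set E :=
  {x ∈ ball c R \ {c} | u x < kelvin p c R u x}

lemma isOpen_kelvinExcessSet (hu : Continuous u) : IsOpen (kelvinExcessSet p c R u) := by
  rcases le_or_gt R 0 with hR | hR
  · simp [kelvinExcessSet, ball_eq_empty.2 hR]
  · exact isOpen_sep_lt (isOpen_ball_diff_center c R) hu.continuousOn
      ((continuousOn_kelvin hu hR.ne').mono fun _ hx => hx.2)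

lemma eventually_notMem_kelvinExcessSet (hu : Continuous u)
    (hlt : ∀ x ∈ ball c R \ {c}, kelvin p c R u x < u x) (hx : x ∉ sphere c R) :
    ∀ᶠ r in 𝓝[>] R, x ∉ kelvinExcessSet p c r u := by
  rcases eq_or_ne x c with rfl | hxc
  · exact .of_forall fun r hr => hr.1.2 rfl
  rcases lt_or_gt_of_ne hx with hin | hout
  · have hR : R ≠ 0 := (dist_nonneg.trans_lt hin).ne'
    filter_upwards [((continuousAt_kelvin_radius hu hR hxc).eventually_lt_const
      (hlt x ⟨hin, hxc⟩)).filter_mono nhdsWithin_le_nhds] with r hr hmem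
    exact lt_asymm hr hmem.2
  · filter_upwards [Ioo_mem_nhdsGT hout] with r hr hmem
    exact lt_asymm hr.2 hmem.1.1

/-- The radii of the spheres centred at `c` inside which `u` dominates its Kelvin transform. -/
def kelvinRadii (p : ℝ) (c : E) (u : E → ℝ) : Set ℝ :=
  {r | 0 < r ∧ ∀ x ∈ ball c r \ {c}, kelvin p c r u x ≤ u x}

lemma csSup_mem_kelvinRadii (hu : Continuous u) {T : Set ℝ} (hT : T ⊆ kelvinRadii p c u)
    (hne : T.Nonempty) (hbdd : BddAbove T) : sSup T ∈ kelvinRadii p c u := by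
  have hpos : 0 < sSup T := by
    obtain ⟨r, hr⟩ := hne
    exact (hT hr).1.trans_le (le_csSup hbdd hr)
  refine ⟨hpos, fun x hx => ?_⟩
  by_contra! hlt
  have hev : ∀ᶠ r in 𝓝 (sSup T), dist x c < r ∧ u x < kelvin p c r u x :=
    (eventually_gt_nhds hx.1).and
      ((continuousAt_kelvin_radius hu hpos.ne' hx.2).eventually_const_lt hlt)
  obtain ⟨r, hr, hxr, hur⟩ := (((isLUB_csSup hne hbdd).frequently_nhds_mem hne).and_eventually
    hev).exists
  exact ((hT hr).2 x ⟨hxr, hx.2⟩).not_gt hur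

lemma bddAbove_kelvinRadii [Nontrivial E] (hp : 0 < p) (hu : ContinuousAt u c) (hm : 0 < m)
    (hlim : Tendsto (fun y => u y / dist y c ^ p) (Bornology.cobounded E) (𝓝 m)) :
    BddAbove (kelvinRadii p c u) := by
  refine ⟨(u c / m) ^ p⁻¹, fun r hr => ?_⟩
  have hle : m * r ^ p ≤ u c := by
    refine le_of_tendsto_of_tendsto (tendsto_kelvin_nhdsNE_center hr.1 hlim)
      (hu.mono_left nhdsWithin_le_nhds) ?_
    filter_upwards [ball_diff_center_mem_nhdsNE c hr.1] with x hx using hr.2 x hx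
  have hpow : r ^ p ≤ u c / m := (le_div_iff₀' hm).2 hle
  exact (Real.le_rpow_inv_iff_of_pos hr.1.le ((Real.rpow_nonneg hr.1.le p).trans hpow) hp).2 hpow

lemma apply_center_eq_of_eqOn_kelvin [Nontrivial E] (hR : 0 < R) (hu : ContinuousAt u c)
    (hlim : Tendsto (fun y => u y / dist y c ^ p) (Bornology.cobounded E) (𝓝 m))
    (h : EqOn (kelvin p c R u) u {c}ᶜ) : u c = m * R ^ p :=
  tendsto_nhds_unique (hu.mono_left nhdsWithin_le_nhds)
    ((tendsto_kelvin_nhdsNE_center hR hlim).congr' (h.eventuallyEq_nhdsWithin))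

variable [FiniteDimensional ℝ E] [MeasurableSpace E] [BorelSpace E] {μ : Measure E}
  [μ.IsAddHaarMeasure] [Nontrivial E]

lemma tendsto_measureReal_kelvinExcessSet (hu : Continuous u)
    (hlt : ∀ x ∈ ball c R \ {c}, kelvin p c R u x < u x) :
    Tendsto (fun r => μ.real (kelvinExcessSet p c r u)) (𝓝[>] R) (𝓝 0) := by
  have hmeasure : Tendsto (fun r => μ (kelvinExcessSet p c r u)) (𝓝[>] R) (𝓝 (μ ∅)) := by
    refine tendsto_measure_of_ae_tendsto_indicator _ .empty
      (fun r => (isOpen_kelvinExcessSet hu).measurableSet) (measurableSet_ball (x := c))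
      (measure_ball_lt_top (r := R + 1)).ne ?_ ?_
    · filter_upwards [Ioo_mem_nhdsGT (lt_add_one R)] with r hr x hx
      exact ball_subset_ball hr.2.le hx.1.1
    · filter_upwards [measure_eq_zero_iff_ae_notMem.1 (Measure.addHaar_sphere μ c R)] with x hx
      simpa using eventually_notMem_kelvinExcessSet hu hlt hx
  rw [measure_empty] at hmeasure
  exact (tendsto_toReal zero_ne_top).comp hmeasure

lemma eventually_mul_measureReal_kelvinExcessSet_le (hp : 0 ≤ p) (hu : Continuous u)
    (hlt : ∀ x ∈ ball c R \ {c}, kelvin p c R u x < u x) (a : ℝ) :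
    ∀ᶠ r in 𝓝[>] R, (2 * r) ^ p * a * μ.real (kelvinExcessSet p c r u) ≤ 1 / 2 := by
  have hweight : ContinuousAt (fun r : ℝ => (2 * r) ^ p * a) R :=
    (((continuous_const_mul 2).rpow_const fun _ => Or.inr hp).mul_const a).continuousAt
  have hlim := (hweight.mono_left nhdsWithin_le_nhds).mul
    (tendsto_measureReal_kelvinExcessSet (μ := μ) hu hlt)
  rw [mul_zero] at hlim
  filter_upwards [hlim.eventually_lt_const one_half_pos] with r hr using hr.le

end KelvinRadii

/-! ### The conformally invariant system -/

section System

variable {E : Type*} [NormedAddCommGroup E] [InnerProductSpace ℝ E] [MeasurableSpace E]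

/-- `u` is the Riesz potential of the density `v ^ (-q)`, with exponents in the conformal relation
`p * q = p + 2 * n`, which makes the equation invariant under Kelvin transforms. The paper's
exponents are `p = α - n` and `κ = θ = -q`; its system says that this holds for `(u, v)` and for
`(v, u)`. -/
structure IsConformalPotential (μ : Measure E) (p q : ℝ) (u v : E → ℝ) : Prop where
  p_pos : 0 < p
  mul_eq : p * q = p + 2 * finrank ℝ E
  continuous : Continuous v
  pos : ∀ x, 0 < v x
  integrable : ∀ y, Integrable (fun x => dist x y ^ p * v x ^ (-q)) μ
  eq_rieszPotential : u = rieszPotential μ p fun x => v x ^ (-q)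

namespace IsConformalPotential

variable {μ : Measure E} {p q m M R : ℝ} {u v : E → ℝ} {c x : E}

lemma q_pos (h : IsConformalPotential μ p q u v) : 0 < q := by
  have hp := h.p_pos
  refine pos_of_mul_pos_right (b := q) (a := p) ?_ hp.le
  rw [h.mul_eq]
  positivity

lemma rpow_nonneg (h : IsConformalPotential μ p q u v) (x : E) : 0 ≤ v x ^ (-q) :=
  Real.rpow_nonneg (h.pos x).le _

lemma nonneg_left (h : IsConformalPotential μ p q u v) (y : E) : 0 ≤ u y := by
  rw [h.eq_rieszPotential]
  exact integral_nonneg fun x => mul_nonneg (by positivity) (h.rpow_nonneg x)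

lemma continuous_rpow (h : IsConformalPotential μ p q u v) : Continuous fun x => v x ^ (-q) :=
  h.continuous.rpow_const fun x => Or.inl (h.pos x).ne'

lemma kelvin_rpow_neg (h : IsConformalPotential μ p q u v) (hR : 0 ≤ R) (x : E) :
    kelvin (-(p + 2 * finrank ℝ E)) c R (fun y => v y ^ (-q)) x = kelvin p c R v x ^ (-q) := by
  rw [kelvin_rpow hR fun z => (h.pos z).le, mul_neg, h.mul_eq]

lemma kelvinKernel_mul_sub_le_indicator (h : IsConformalPotential μ p q u v) (hm : 0 < m)
    (hv : ∀ y ∈ ball c R \ {c}, m ≤ v y) (hM : ∀ y ∈ ball c R \ {c}, kelvin p c R v y - v y ≤ M)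
    (hx : x ∈ ball c R \ {c}) {y : E} (hy : y ∈ ball c R \ {c}) :
    kelvinKernel p c R x y * (v y ^ (-q) - kelvin p c R v y ^ (-q))
      ≤ (kelvinExcessSet p c R v).indicator (fun _ => (2 * R) ^ p * (q * m ^ (-q - 1) * M)) y := by
  have hR := pos_of_mem_ball_diff_center hx
  have hK := kelvinKernel_pos h.p_pos hx hy.1
  by_cases hyS : y ∈ kelvinExcessSet p c R v
  · rw [indicator_of_mem hyS]
    have hvlt : v y < kelvin p c R v y := hyS.2
    exact mul_le_mul (kelvinKernel_le h.p_pos.le hx hy.1)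
      (rpow_neg_sub_rpow_neg_le_of_le hm (hv y hy) hvlt.le (hM y hy) h.q_pos.le)
      (sub_nonneg.2 (Real.rpow_le_rpow_of_nonpos (h.pos y) hvlt.le (neg_nonpos.2 h.q_pos.le)))
      (by positivity)
  · rw [indicator_of_notMem hyS]
    have hvle : kelvin p c R v y ≤ v y := not_lt.1 fun hlt => hyS ⟨hy, hlt⟩
    exact mul_nonpos_of_nonneg_of_nonpos hK.le (sub_nonpos.2
      (Real.rpow_le_rpow_of_nonpos (kelvin_pos hR h.pos hy.2) hvle (neg_nonpos.2 h.q_pos.le)))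

variable [BorelSpace E]

lemma aestronglyMeasurable_rpow (h : IsConformalPotential μ p q u v) :
    AEStronglyMeasurable (fun x => v x ^ (-q)) μ :=
  h.continuous_rpow.aestronglyMeasurable

section NontrivialSpace

variable [Nontrivial E]

lemma of_lintegral (hp : 0 < p) (hpq : p * q = p + 2 * finrank ℝ E)
    (hu : AEMeasurable u μ) (hv : AEMeasurable v μ)
    (hupos : ∀ x, 0 < u x) (hvpos : ∀ x, 0 < v x)
    (hueq : ∀ y, ENNReal.ofReal (u y) = ∫⁻ x, ENNReal.ofReal (dist x y ^ p * v x ^ (-q)) ∂μ)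
    (hveq : ∀ y, ENNReal.ofReal (v y) = ∫⁻ x, ENNReal.ofReal (dist x y ^ p * u x ^ (-q)) ∂μ) :
    IsConformalPotential μ p q u v := by
  have hu' := (hu.pow_const (-q)).aestronglyMeasurable
  obtain ⟨hint_u, hrep_u⟩ := integrable_and_eq_rieszPotential_of_lintegral
    (hv.pow_const (-q)).aestronglyMeasurable (fun x => Real.rpow_nonneg (hvpos x).le _)
    (fun y => (hupos y).le) hueq
  obtain ⟨hint_v, hrep_v⟩ := integrable_and_eq_rieszPotential_of_lintegral hu'
    (fun x => Real.rpow_nonneg (hupos x).le _) (fun y => (hvpos y).le) hveq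
  obtain ⟨a, b, hab⟩ := exists_pair_ne E
  have hcont : Continuous v := by
    rw [hrep_v]
    exact continuous_rieszPotential hp.le hu' (_root_.integrable_one_add_dist_rpow_mul hp.le hu'
      (dist_pos.2 hab) (hint_v a) (hint_v b) 0)
  exact ⟨hp, hpq, hcont, hvpos, hint_u, hrep_u⟩

lemma integrable_one_add_dist_rpow_mul (h : IsConformalPotential μ p q u v) (c : E) :
    Integrable (fun x => (1 + dist x c) ^ p * v x ^ (-q)) μ := by
  obtain ⟨a, b, hab⟩ := exists_pair_ne E
  exact _root_.integrable_one_add_dist_rpow_mul h.p_pos.le h.aestronglyMeasurable_rpow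
    (dist_pos.2 hab) (h.integrable a) (h.integrable b) c

lemma tendsto_div_dist_rpow (h : IsConformalPotential μ p q u v) (c : E) :
    Tendsto (fun y => u y / dist y c ^ p) (Bornology.cobounded E) (𝓝 (∫ x, v x ^ (-q) ∂μ)) := by
  rw [h.eq_rieszPotential]
  exact tendsto_rieszPotential_div_dist_rpow h.p_pos.le h.aestronglyMeasurable_rpow
    (h.integrable_one_add_dist_rpow_mul c)

lemma exists_kelvin_sub_le (h : IsConformalPotential μ p q u v) (c : E) (R : ℝ) :
    ∃ C, ∀ x ∈ ball c R \ {c}, kelvin p c R u x - u x ≤ C := by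
  refine ⟨(1 + R) ^ p * ∫ x, (1 + dist x c) ^ p * v x ^ (-q) ∂μ, fun x hx =>
    (sub_le_self _ (h.nonneg_left x)).trans
      (kelvin_le_of_le_one_add_dist_rpow_mul h.p_pos.le ?_ (fun y => ?_) hx)⟩
  · exact integral_nonneg fun x => mul_nonneg (by positivity) (h.rpow_nonneg x)
  · rw [h.eq_rieszPotential]
    exact rieszPotential_le h.p_pos.le h.rpow_nonneg (h.integrable_one_add_dist_rpow_mul c) y

lemma integral_rpow_pos [μ.IsOpenPosMeasure] (h : IsConformalPotential μ p q u v) :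
    0 < ∫ x, v x ^ (-q) ∂μ := by
  have hsupp : (Function.support fun x => v x ^ (-q)) = univ :=
    eq_univ_of_forall fun x => (Real.rpow_pos_of_pos (h.pos x) _).ne'
  rw [integral_pos_iff_support_of_nonneg h.rpow_nonneg
    (integrable_of_integrable_one_add_dist_rpow_mul h.p_pos.le h.aestronglyMeasurable_rpow
      (h.integrable_one_add_dist_rpow_mul 0)), hsupp]
  exact isOpen_univ.measure_pos μ univ_nonempty

end NontrivialSpace

variable [FiniteDimensional ℝ E] [μ.IsAddHaarMeasure]

lemma integrableOn_kelvinKernel_mul_sub (h : IsConformalPotential μ p q u v) (hR : 0 < R)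
    (hx : x ≠ c) :
    IntegrableOn (fun y => kelvinKernel p c R x y * (v y ^ (-q) - kelvin p c R v y ^ (-q)))
      (ball c R \ {c}) μ := by
  simpa only [h.kelvin_rpow_neg hR.le] using
    integrableOn_kelvinKernel_mul_sub_kelvin hR h.integrable hx

variable [Nontrivial E]

lemma kelvin_sub_eq (h : IsConformalPotential μ p q u v) (hR : 0 < R) (hx : x ≠ c) :
    kelvin p c R u x - u x = ∫ y in ball c R \ {c},
      kelvinKernel p c R x y * (v y ^ (-q) - kelvin p c R v y ^ (-q)) ∂μ := by
  simp only [h.eq_rieszPotential, ← h.kelvin_rpow_neg hR.le]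
  exact kelvin_rieszPotential_sub_eq_setIntegral hR h.integrable hx

lemma kelvin_sub_le (h : IsConformalPotential μ p q u v) (hm : 0 < m)
    (hv : ∀ y ∈ ball c R \ {c}, m ≤ v y) (hM : ∀ y ∈ ball c R \ {c}, kelvin p c R v y - v y ≤ M)
    (hx : x ∈ ball c R \ {c}) :
    kelvin p c R u x - u x
      ≤ (2 * R) ^ p * (q * m ^ (-q - 1)) * μ.real (kelvinExcessSet p c R v) * M := by
  have hR := pos_of_mem_ball_diff_center hx
  have hball := (isOpen_ball_diff_center c R).measurableSet
  have hexcess : MeasurableSet (kelvinExcessSet p c R v) :=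
    (isOpen_kelvinExcessSet h.continuous).measurableSet
  have hsubset : kelvinExcessSet p c R v ⊆ ball c R \ {c} := sep_subset _ _
  have hfinite : μ (ball c R \ {c}) ≠ ∞ :=
    measure_ne_top_of_subset sdiff_subset measure_ball_lt_top.ne
  calc kelvin p c R u x - u x
      = ∫ y in ball c R \ {c}, kelvinKernel p c R x y * (v y ^ (-q) - kelvin p c R v y ^ (-q)) ∂μ :=
        h.kelvin_sub_eq hR hx.2
    _ ≤ ∫ y in ball c R \ {c}, (kelvinExcessSet p c R v).indicator
          (fun _ => (2 * R) ^ p * (q * m ^ (-q - 1) * M)) y ∂μ :=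
        setIntegral_mono_on (h.integrableOn_kelvinKernel_mul_sub hR hx.2)
          ((integrableOn_const hfinite).indicator hexcess) hball
          fun y hy => h.kelvinKernel_mul_sub_le_indicator hm hv hM hx hy
    _ = (2 * R) ^ p * (q * m ^ (-q - 1)) * μ.real (kelvinExcessSet p c R v) * M := by
        rw [setIntegral_indicator hexcess, inter_eq_right.2 hsubset, setIntegral_const,
          smul_eq_mul]
        ring

lemma kelvin_lt (h : IsConformalPotential μ p q u v) (hR : R ∈ kelvinRadii p c v) {x₀ : E}
    (hx₀ : x₀ ∈ ball c R \ {c}) (hlt : kelvin p c R v x₀ < v x₀) (hx : x ∈ ball c R \ {c}) :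
    kelvin p c R u x < u x := by
  have hkelvin : ∀ y ∈ ball c R \ {c}, 0 < kelvin p c R v y := fun y hy =>
    kelvin_pos hR.1 h.pos hy.2
  rw [← sub_neg, h.kelvin_sub_eq hR.1 hx.2, ← neg_pos, ← integral_neg]
  refine (setIntegral_pos_iff_support_of_nonneg_ae ?_
    (h.integrableOn_kelvinKernel_mul_sub hR.1 hx.2).neg).2 ?_
  · filter_upwards [ae_restrict_mem (isOpen_ball_diff_center c R).measurableSet] with y hy
    exact neg_nonneg.2 (mul_nonpos_of_nonneg_of_nonpos (kelvinKernel_pos h.p_pos hx hy.1).le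
      (sub_nonpos.2 (Real.rpow_le_rpow_of_nonpos (hkelvin y hy) (hR.2 y hy)
        (neg_nonpos.2 h.q_pos.le))))
  · have hopen : IsOpen {y ∈ ball c R \ {c} | kelvin p c R v y < v y} :=
      isOpen_sep_lt (isOpen_ball_diff_center c R)
        ((continuousOn_kelvin h.continuous hR.1.ne').mono fun _ hy => hy.2)
        h.continuous.continuousOn
    refine (hopen.measure_pos μ ⟨x₀, hx₀, hlt⟩).trans_le (measure_mono fun y hy => ⟨?_, hy.1⟩)
    exact neg_ne_zero.2 (mul_ne_zero (kelvinKernel_pos h.p_pos hx hy.1.1).ne'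
      (sub_neg.2 (Real.rpow_lt_rpow_of_neg (hkelvin y hy.1) hy.2 (neg_neg_of_pos h.q_pos))).ne)

lemma eqOn_kelvin (h : IsConformalPotential μ p q u v) (hR : 0 < R)
    (hv : EqOn (kelvin p c R v) v (ball c R \ {c})) :
    EqOn (kelvin p c R u) u (ball c R \ {c}) := by
  intro x hx
  rw [← sub_eq_zero, h.kelvin_sub_eq hR hx.2]
  refine setIntegral_eq_zero_of_forall_eq_zero fun y hy => ?_
  rw [hv hy, sub_self, mul_zero]

end IsConformalPotential

end System

section MovingSpheres

variable {E : Type*} [NormedAddCommGroup E] [InnerProductSpace ℝ E] [FiniteDimensional ℝ E]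
  [Nontrivial E] [MeasurableSpace E] [BorelSpace E] {μ : Measure E} [μ.IsAddHaarMeasure]
  {p q m R : ℝ} {u v : E → ℝ} {c : E}

namespace IsConformalPotential

lemma kelvin_sub_le_mul_half_pow (huv : IsConformalPotential μ p q u v)
    (hvu : IsConformalPotential μ p q v u) (hm : 0 < m)
    (hmu : ∀ y ∈ ball c R \ {c}, m ≤ u y) (hmv : ∀ y ∈ ball c R \ {c}, m ≤ v y)
    (hsmallu : (2 * R) ^ p * (q * m ^ (-q - 1)) * μ.real (kelvinExcessSet p c R u) ≤ 1 / 2)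
    (hsmallv : (2 * R) ^ p * (q * m ^ (-q - 1)) * μ.real (kelvinExcessSet p c R v) ≤ 1 / 2)
    {C : ℝ} (hC : 0 ≤ C) (hCu : ∀ y ∈ ball c R \ {c}, kelvin p c R u y - u y ≤ C)
    (hCv : ∀ y ∈ ball c R \ {c}, kelvin p c R v y - v y ≤ C) (k : ℕ) :
    (∀ y ∈ ball c R \ {c}, kelvin p c R u y - u y ≤ C * (1 / 2) ^ k) ∧
      ∀ y ∈ ball c R \ {c}, kelvin p c R v y - v y ≤ C * (1 / 2) ^ k := by
  induction k with
  | zero => simpa only [pow_zero, mul_one] using And.intro hCu hCv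
  | succ k ih =>
    have hhalf : ∀ t ≤ (1 / 2 : ℝ), t * (C * (1 / 2) ^ k) ≤ C * (1 / 2) ^ (k + 1) := by
      intro t ht
      rw [pow_succ', mul_left_comm C]
      gcongr
    exact ⟨fun y hy => (huv.kelvin_sub_le hm hmv ih.2 hy).trans (hhalf _ hsmallv),
      fun y hy => (hvu.kelvin_sub_le hm hmu ih.1 hy).trans (hhalf _ hsmallu)⟩

lemma mem_kelvinRadii_of_measureReal_le (huv : IsConformalPotential μ p q u v)
    (hvu : IsConformalPotential μ p q v u) (hR : 0 < R) (hm : 0 < m)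
    (hmu : ∀ y ∈ ball c R \ {c}, m ≤ u y) (hmv : ∀ y ∈ ball c R \ {c}, m ≤ v y)
    (hsmallu : (2 * R) ^ p * (q * m ^ (-q - 1)) * μ.real (kelvinExcessSet p c R u) ≤ 1 / 2)
    (hsmallv : (2 * R) ^ p * (q * m ^ (-q - 1)) * μ.real (kelvinExcessSet p c R v) ≤ 1 / 2) :
    R ∈ kelvinRadii p c u ∩ kelvinRadii p c v := by
  obtain ⟨Cu, hCu⟩ := huv.exists_kelvin_sub_le c R
  obtain ⟨Cv, hCv⟩ := hvu.exists_kelvin_sub_le c R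
  set C := max 0 (max Cu Cv)
  have hdecay := huv.kelvin_sub_le_mul_half_pow hvu hm hmu hmv hsmallu hsmallv (C := C)
    (le_max_left _ _)
    (fun y hy => (hCu y hy).trans ((le_max_left _ _).trans (le_max_right _ _)))
    (fun y hy => (hCv y hy).trans ((le_max_right _ _).trans (le_max_right _ _)))
  have hlim : Tendsto (fun k : ℕ => C * (1 / 2 : ℝ) ^ k) atTop (𝓝 0) := by
    simpa using (tendsto_pow_atTop_nhds_zero_of_lt_one (r := (1 / 2 : ℝ)) (by norm_num)
      (by norm_num)).const_mul C
  exact ⟨⟨hR, fun x hx => sub_nonpos.1 (ge_of_tendsto' hlim fun k => (hdecay k).1 x hx)⟩,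
    ⟨hR, fun x hx => sub_nonpos.1 (ge_of_tendsto' hlim fun k => (hdecay k).2 x hx)⟩⟩

lemma exists_gt_mem_kelvinRadii (huv : IsConformalPotential μ p q u v)
    (hvu : IsConformalPotential μ p q v u) (hR : 0 ≤ R)
    (hu : ∀ x ∈ ball c R \ {c}, kelvin p c R u x < u x)
    (hv : ∀ x ∈ ball c R \ {c}, kelvin p c R v x < v x) :
    ∃ r > R, r ∈ kelvinRadii p c u ∩ kelvinRadii p c v := by
  have hcompact := isCompact_closedBall c (R + 1)
  obtain ⟨mu, hmu, hle_u⟩ := hcompact.exists_forall_le' (a := 0) hvu.continuous.continuousOn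
    fun y _ => hvu.pos y
  obtain ⟨mv, hmv, hle_v⟩ := hcompact.exists_forall_le' (a := 0) huv.continuous.continuousOn
    fun y _ => huv.pos y
  set m := min mu mv
  obtain ⟨r, hsmallu, hsmallv, hr⟩ :=
    ((eventually_mul_measureReal_kelvinExcessSet_le (μ := μ) huv.p_pos.le hvu.continuous hu
      (q * m ^ (-q - 1))).and
      ((eventually_mul_measureReal_kelvinExcessSet_le (μ := μ) huv.p_pos.le huv.continuous hv
        (q * m ^ (-q - 1))).and (Ioo_mem_nhdsGT (lt_add_one R)))).exists
  have hsubset : ball c r \ {c} ⊆ closedBall c (R + 1) :=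
    sdiff_subset.trans (ball_subset_closedBall.trans (closedBall_subset_closedBall hr.2.le))
  exact ⟨r, hr.1, huv.mem_kelvinRadii_of_measureReal_le hvu (hR.trans_lt hr.1) (lt_min hmu hmv)
    (fun y hy => (min_le_left _ _).trans (hle_u y (hsubset hy)))
    (fun y hy => (min_le_right _ _).trans (hle_v y (hsubset hy))) hsmallu hsmallv⟩

lemma eqOn_kelvin_of_forall_not_gt (huv : IsConformalPotential μ p q u v)
    (hvu : IsConformalPotential μ p q v u) (hR : R ∈ kelvinRadii p c u ∩ kelvinRadii p c v)
    (hmax : ∀ r > R, r ∉ kelvinRadii p c u ∩ kelvinRadii p c v) :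
    EqOn (kelvin p c R v) v (ball c R \ {c}) := by
  intro x hx
  by_contra hne
  have hltu := fun y hy => huv.kelvin_lt (x := y) hR.2 hx ((hR.2.2 x hx).lt_of_ne hne) hy
  have hltv := fun y hy => hvu.kelvin_lt (x := y) hR.1 hx (hltu x hx) hy
  obtain ⟨r, hr, hmem⟩ := huv.exists_gt_mem_kelvinRadii hvu hR.1.1.le hltu hltv
  exact hmax r hr hmem

theorem exists_eqOn_kelvin (huv : IsConformalPotential μ p q u v)
    (hvu : IsConformalPotential μ p q v u) (c : E) :
    ∃ R > 0, EqOn (kelvin p c R u) u {c}ᶜ ∧ EqOn (kelvin p c R v) v {c}ᶜ := by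
  set T := kelvinRadii p c u ∩ kelvinRadii p c v
  have hne : T.Nonempty := by
    obtain ⟨r, -, hr⟩ := huv.exists_gt_mem_kelvinRadii hvu (c := c) le_rfl (by simp) (by simp)
    exact ⟨r, hr⟩
  have hbdd : BddAbove T := (bddAbove_kelvinRadii huv.p_pos hvu.continuous.continuousAt
    huv.integral_rpow_pos (huv.tendsto_div_dist_rpow c)).mono inter_subset_left
  have hR : sSup T ∈ T := ⟨csSup_mem_kelvinRadii hvu.continuous inter_subset_left hne hbdd,
    csSup_mem_kelvinRadii huv.continuous inter_subset_right hne hbdd⟩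
  have hv := huv.eqOn_kelvin_of_forall_not_gt hvu hR fun r hr => notMem_of_csSup_lt hr hbdd
  exact ⟨sSup T, hR.1.1, eqOn_kelvin_compl_center hR.1.1 (huv.eqOn_kelvin hR.1.1 hv),
    eqOn_kelvin_compl_center hR.1.1 hv⟩

end IsConformalPotential

end MovingSpheres

/-! ### Functions invariant under a Kelvin transform about every centre -/

section SphericalRigidity

lemma apply_eq_of_norm_sub_le_norm_sub_sq {E F : Type*} [NormedAddCommGroup E] [NormedSpace ℝ E]
    [NormedAddCommGroup F] [NormedSpace ℝ F] {g : E → F}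
    (hg : ∀ x y, ‖g x - g y‖ ≤ ‖x - y‖ ^ 2) (x y : E) : g x = g y := by
  have hderiv : ∀ y, HasFDerivAt g (0 : E →L[ℝ] F) y := by
    intro y
    have hbigO : (fun x => g x - g y) =O[𝓝 y] fun x => ‖x - y‖ ^ 2 :=
      .of_bound 1 (.of_forall fun x => by simpa using hg x y)
    exact (hasFDerivAt_sub_const_iff (g y)).1 (hbigO.hasFDerivAt one_lt_two)
  exact is_const_of_fderiv_eq_zero (𝕜 := ℝ) (fun y => (hderiv y).differentiableAt)
    (fun y => (hderiv y).fderiv) x y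

variable {E : Type*} [NormedAddCommGroup E] [InnerProductSpace ℝ E] {f : E → ℝ} {c x y x₀ : E}

lemma kelvin_two_sqrt_apply_center (hf : 0 < f c) :
    kelvin 2 c √(f c) f x = ‖x - c‖ ^ 2 / f c * f (inversion c √(f c) x) := by
  rw [kelvin, Real.rpow_two, div_pow, Real.sq_sqrt hf.le, dist_eq_norm]

lemma norm_sub_sq_le_of_eqOn_kelvin (hf : ∀ z, 0 < f z) (hmin : ∀ z, f x₀ ≤ f z)
    (h : EqOn (kelvin 2 x₀ √(f x₀) f) f {x₀}ᶜ) (x : E) : ‖x - x₀‖ ^ 2 ≤ f x := by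
  rcases eq_or_ne x x₀ with rfl | hx
  · simpa using (hf x).le
  · rw [← h hx, kelvin_two_sqrt_apply_center (hf x₀)]
    calc ‖x - x₀‖ ^ 2 = ‖x - x₀‖ ^ 2 / f x₀ * f x₀ := (div_mul_cancel₀ _ (hf x₀).ne').symm
      _ ≤ ‖x - x₀‖ ^ 2 / f x₀ * f (inversion x₀ √(f x₀) x) :=
        mul_le_mul_of_nonneg_left (hmin _) (div_nonneg (sq_nonneg _) (hf x₀).le)

lemma norm_inversion_sqrt_sub_sq (hf : 0 < f c) (hx : x ≠ c) (x₀ : E) :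
    ‖x - c‖ ^ 2 / f c * ‖inversion c √(f c) x - x₀‖ ^ 2
      = f c + 2 * inner ℝ (x - c) (c - x₀) + ‖c - x₀‖ ^ 2 / f c * ‖x - c‖ ^ 2 := by
  have hxc : 0 < ‖x - c‖ := norm_sub_pos_iff.2 hx
  have hinv : inversion c √(f c) x - x₀ = (f c / ‖x - c‖ ^ 2) • (x - c) + (c - x₀) := by
    rw [inversion, dist_eq_norm, div_pow, Real.sq_sqrt hf.le, vsub_eq_sub, vadd_eq_add,
      add_sub_assoc]
  rw [hinv, norm_add_sq_real, norm_smul, real_inner_smul_left, Real.norm_of_nonneg (by positivity)]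
  field_simp

lemma sub_norm_sq_sub_le (hf : ∀ z, 0 < f z)
    (hlb : ∀ z, ‖z - x₀‖ ^ 2 ≤ f z) (h : EqOn (kelvin 2 c √(f c) f) f {c}ᶜ) (x : E) :
    (f c - ‖c - x₀‖ ^ 2) - (f x - ‖x - x₀‖ ^ 2) ≤ ‖x - c‖ ^ 2 := by
  rcases eq_or_ne x c with rfl | hx
  · simp
  have hfx : ‖x - c‖ ^ 2 / f c * ‖inversion c √(f c) x - x₀‖ ^ 2 ≤ f x := by
    rw [← h hx, kelvin_two_sqrt_apply_center (hf c)]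
    have := hf c
    gcongr
    exact hlb _
  rw [norm_inversion_sqrt_sub_sq (hf c) hx] at hfx
  have hexpand : ‖x - x₀‖ ^ 2 = ‖x - c‖ ^ 2 + 2 * inner ℝ (x - c) (c - x₀) + ‖c - x₀‖ ^ 2 := by
    rw [← norm_add_sq_real, sub_add_sub_cancel]
  have hlast : 0 ≤ ‖c - x₀‖ ^ 2 / f c * ‖x - c‖ ^ 2 := by
    have := hf c
    positivity
  linarith

theorem eq_norm_sub_sq_add_of_eqOn_kelvin (hf : ∀ z, 0 < f z) (hmin : ∀ z, f x₀ ≤ f z)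
    (h : ∀ c, EqOn (kelvin 2 c √(f c) f) f {c}ᶜ) (x : E) : f x = ‖x - x₀‖ ^ 2 + f x₀ := by
  have hlb := norm_sub_sq_le_of_eqOn_kelvin hf hmin (h x₀)
  have hconst := apply_eq_of_norm_sub_le_norm_sub_sq (g := fun z => f z - ‖z - x₀‖ ^ 2) (fun y z =>
    abs_sub_le_iff.2 ⟨norm_sub_rev y z ▸ sub_norm_sq_sub_le hf hlb (h y) z,
      sub_norm_sq_sub_le hf hlb (h z) y⟩) x x₀
  simp only [sub_self, norm_zero] at hconst
  linarith

end SphericalRigidity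

section Classification

variable {E : Type*} [NormedAddCommGroup E] [InnerProductSpace ℝ E] [MeasurableSpace E]
  {μ : Measure E} {p q : ℝ} {u v : E → ℝ}

/-- The potential `u` normalised to be a squared distance up to an additive constant. -/
noncomputable def quadraticProfile (μ : Measure E) (p q : ℝ) (u v : E → ℝ) (x : E) : ℝ :=
  (u x / ∫ y, v y ^ (-q) ∂μ) ^ (2 / p)

namespace IsConformalPotential

variable [Nontrivial E] [BorelSpace E]

lemma quadraticProfile_pos [μ.IsOpenPosMeasure] (huv : IsConformalPotential μ p q u v)
    (hvu : IsConformalPotential μ p q v u) (x : E) : 0 < quadraticProfile μ p q u v x :=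
  Real.rpow_pos_of_pos (div_pos (hvu.pos x) huv.integral_rpow_pos) _

variable [FiniteDimensional ℝ E]

lemma exists_forall_apply_le [μ.IsOpenPosMeasure] (huv : IsConformalPotential μ p q u v)
    (hvu : IsConformalPotential μ p q v u) : ∃ x₀, ∀ x, u x₀ ≤ u x := by
  refine hvu.continuous.exists_forall_le ?_
  rw [← cobounded_eq_cocompact]
  have hdist := tendsto_dist_right_cobounded_atTop (0 : E)
  refine ((huv.tendsto_div_dist_rpow 0).pos_mul_atTop huv.integral_rpow_pos
    ((tendsto_rpow_atTop huv.p_pos).comp hdist)).congr' ?_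
  filter_upwards [hdist.eventually_gt_atTop 0] with x hx
  exact div_mul_cancel₀ _ (Real.rpow_pos_of_pos hx p).ne'

variable [μ.IsAddHaarMeasure]

lemma exists_eqOn_kelvin_and_apply_eq (huv : IsConformalPotential μ p q u v)
    (hvu : IsConformalPotential μ p q v u) (c : E) :
    ∃ R > 0, EqOn (kelvin p c R u) u {c}ᶜ ∧ u c = (∫ x, v x ^ (-q) ∂μ) * R ^ p ∧
      v c = (∫ x, u x ^ (-q) ∂μ) * R ^ p := by
  obtain ⟨R, hR, hu, hv⟩ := huv.exists_eqOn_kelvin hvu c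
  exact ⟨R, hR, hu,
    apply_center_eq_of_eqOn_kelvin hR hvu.continuous.continuousAt (huv.tendsto_div_dist_rpow c) hu,
    apply_center_eq_of_eqOn_kelvin hR huv.continuous.continuousAt (hvu.tendsto_div_dist_rpow c) hv⟩

lemma eq_integral_mul_quadraticProfile_rpow (huv : IsConformalPotential μ p q u v)
    (hvu : IsConformalPotential μ p q v u) (c : E) :
    u c = (∫ x, v x ^ (-q) ∂μ) * quadraticProfile μ p q u v c ^ (p / 2) ∧
      v c = (∫ x, u x ^ (-q) ∂μ) * quadraticProfile μ p q u v c ^ (p / 2) := by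
  obtain ⟨R, hR, -, hu, hv⟩ := huv.exists_eqOn_kelvin_and_apply_eq hvu c
  have hp := huv.p_pos.ne'
  have hexp : 2 / p * (p / 2) = 1 := by field_simp
  have hprofile : quadraticProfile μ p q u v c ^ (p / 2) = R ^ p := by
    rw [quadraticProfile, hu, mul_div_cancel_left₀ _ huv.integral_rpow_pos.ne',
      ← Real.rpow_mul (by positivity), hexp, Real.rpow_one]
  rw [hprofile]
  exact ⟨hu, hv⟩

lemma eqOn_kelvin_quadraticProfile (huv : IsConformalPotential μ p q u v)
    (hvu : IsConformalPotential μ p q v u) (c : E) :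
    EqOn (kelvin 2 c √(quadraticProfile μ p q u v c) (quadraticProfile μ p q u v))
      (quadraticProfile μ p q u v) {c}ᶜ := by
  obtain ⟨R, hR, hkelvin, hu, -⟩ := huv.exists_eqOn_kelvin_and_apply_eq hvu c
  have hp := huv.p_pos.ne'
  have hexp : p * (2 / p) = 2 := by field_simp
  have hradius : quadraticProfile μ p q u v c = R ^ 2 := by
    rw [quadraticProfile, hu, mul_div_cancel_left₀ _ huv.integral_rpow_pos.ne',
      ← Real.rpow_mul hR.le, hexp, Real.rpow_two]
  intro x hx
  have hrpow := kelvin_rpow (p := p) (s := 2 / p) (c := c) (x := x) hR.le fun z =>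
    (div_pos (hvu.pos z) huv.integral_rpow_pos).le
  rw [kelvin_div_const, hkelvin hx, hexp] at hrpow
  rw [hradius, Real.sqrt_sq hR.le]
  exact hrpow.symm

theorem exists_eq_mul_norm_sub_sq_add_rpow (huv : IsConformalPotential μ p q u v)
    (hvu : IsConformalPotential μ p q v u) :
    ∃ (c₁ c₂ d : ℝ) (ξ₀ : E), 0 < c₁ ∧ 0 < c₂ ∧ 0 < d ∧ ∀ ξ,
      u ξ = c₁ * (‖ξ - ξ₀‖ ^ 2 + d ^ 2) ^ (p / 2) ∧
        v ξ = c₂ * (‖ξ - ξ₀‖ ^ 2 + d ^ 2) ^ (p / 2) := by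
  obtain ⟨x₀, hx₀⟩ := huv.exists_forall_apply_le hvu
  have hpos := huv.quadraticProfile_pos hvu
  have hmin : ∀ x, quadraticProfile μ p q u v x₀ ≤ quadraticProfile μ p q u v x := fun x =>
    Real.rpow_le_rpow (div_nonneg (hvu.pos x₀).le huv.integral_rpow_pos.le)
      (div_le_div_of_nonneg_right (hx₀ x) huv.integral_rpow_pos.le)
      (div_nonneg zero_le_two huv.p_pos.le)
  refine ⟨_, _, √(quadraticProfile μ p q u v x₀), x₀, huv.integral_rpow_pos, hvu.integral_rpow_pos,
    Real.sqrt_pos.2 (hpos x₀), fun ξ => ?_⟩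
  rw [Real.sq_sqrt (hpos x₀).le, ← eq_norm_sub_sq_add_of_eqOn_kelvin hpos hmin
    (huv.eqOn_kelvin_quadraticProfile hvu)]
  exact huv.eq_integral_mul_quadraticProfile_rpow hvu ξ

end IsConformalPotential

end Classification

theorem integral_system_classification_general {E : Type*} [NormedAddCommGroup E]
    [InnerProductSpace ℝ E] [FiniteDimensional ℝ E] [Nontrivial E] [MeasurableSpace E]
    [BorelSpace E] {μ : Measure E} [μ.IsAddHaarMeasure] {n : ℕ} (hn : finrank ℝ E = n) {α : ℝ}
    (hα : (n : ℝ) < α) {u v : E → ℝ} (hu : AEMeasurable u μ) (hv : AEMeasurable v μ)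
    (hupos : ∀ y, 0 < u y) (hvpos : ∀ x, 0 < v x)
    (hueq : ∀ y, ENNReal.ofReal (u y) =
      ∫⁻ x, ENNReal.ofReal (dist x y ^ (α - n) * v x ^ (((n : ℝ) + α) / ((n : ℝ) - α))) ∂μ)
    (hveq : ∀ x, ENNReal.ofReal (v x) =
      ∫⁻ y, ENNReal.ofReal (dist x y ^ (α - n) * u y ^ (((n : ℝ) + α) / ((n : ℝ) - α))) ∂μ) :
    ∃ (c₁ c₂ d : ℝ) (ξ₀ : E), 0 < c₁ ∧ 0 < c₂ ∧ 0 < d ∧ ∀ ξ : E,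
      u ξ = c₁ * (1 / (‖ξ - ξ₀‖ ^ 2 + d ^ 2)) ^ (((n : ℝ) - α) / 2) ∧
        v ξ = c₂ * (1 / (‖ξ - ξ₀‖ ^ 2 + d ^ 2)) ^ (((n : ℝ) - α) / 2) := by
  have hp : 0 < α - n := sub_pos.2 hα
  have hpq : (α - n) * (((n : ℝ) + α) / (α - n)) = (α - n) + 2 * finrank ℝ E := by
    rw [mul_div_cancel₀ _ hp.ne', hn]
    ring
  have hexp : ((n : ℝ) + α) / (n - α) = -((n + α) / (α - n)) := by rw [← div_neg, neg_sub]
  simp only [hexp] at hueq hveq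
  have huv := IsConformalPotential.of_lintegral hp hpq hu hv hupos hvpos hueq (by
    simpa only [dist_comm] using hveq)
  have hvu := IsConformalPotential.of_lintegral hp hpq hv hu hvpos hupos (by
    simpa only [dist_comm] using hveq) hueq
  have hrpow : ∀ s : ℝ, 0 ≤ s → (1 / s) ^ (((n : ℝ) - α) / 2) = s ^ ((α - n) / 2) := by
    intro s hs
    rw [one_div, Real.inv_rpow hs, ← Real.rpow_neg hs, ← neg_div, neg_sub]
  obtain ⟨c₁, c₂, d, ξ₀, hc₁, hc₂, hd, hform⟩ := huv.exists_eq_mul_norm_sub_sq_add_rpow hvu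
  refine ⟨c₁, c₂, d, ξ₀, hc₁, hc₂, hd, fun ξ => ?_⟩
  rw [hrpow _ (by positivity)]
  exact hform ξ

/-- **Classification of positive solutions of the conformally invariant integral system**
(Theorem 3.3): for `1 ≤ n < α` and `θ = κ = (n+α)/(n-α)`, every pair `(u, v)` of positive
finite smooth solutions of `u(y) = ∫ |x-y|^(α-n) v(x)^κ dx`,
`v(x) = ∫ |x-y|^(α-n) u(y)^θ dy` is of the form
`u(ξ) = c₁ (1/(|ξ-ξ₀|² + d²))^((n-α)/2)`, `v(ξ) = c₂ (1/(|ξ-ξ₀|² + d²))^((n-α)/2)`. -/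
theorem integral_system_classification (n : ℕ) (hn : 1 ≤ n) (α : ℝ)
    (hα : (n : ℝ) < α)
    (u v : EuclideanSpace ℝ (Fin n) → ℝ)
    (husmooth : ContDiff ℝ (⊤ : ℕ∞) u) (hvsmooth : ContDiff ℝ (⊤ : ℕ∞) v)
    (hupos : ∀ y, 0 < u y) (hvpos : ∀ x, 0 < v x)
    (hueq : ∀ y, ENNReal.ofReal (u y) =
      ∫⁻ x, ENNReal.ofReal (dist x y ^ (α - n) * v x ^ (((n : ℝ) + α) / ((n : ℝ) - α))))
    (hveq : ∀ x, ENNReal.ofReal (v x) =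
      ∫⁻ y, ENNReal.ofReal (dist x y ^ (α - n) * u y ^ (((n : ℝ) + α) / ((n : ℝ) - α)))) :
    ∃ (c₁ c₂ d : ℝ) (ξ₀ : EuclideanSpace ℝ (Fin n)), 0 < c₁ ∧ 0 < c₂ ∧ 0 < d ∧
      ∀ ξ : EuclideanSpace ℝ (Fin n),
        u ξ = c₁ * (1 / (‖ξ - ξ₀‖ ^ 2 + d ^ 2)) ^ (((n : ℝ) - α) / 2) ∧
        v ξ = c₂ * (1 / (‖ξ - ξ₀‖ ^ 2 + d ^ 2)) ^ (((n : ℝ) - α) / 2) := by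
  have : Nonempty (Fin n) := ⟨⟨0, hn⟩⟩
  exact integral_system_classification_general finrank_euclideanSpace_fin hα
    husmooth.continuous.aemeasurable hvsmooth.continuous.aemeasurable hupos hvpos hueq hveq
end
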